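/- The set E_L is uncountable, has Hausdorff dimension zero, and for every β>1 the bifurcation set E_β contains no isolated points if and only if β ∈ E_L. -/

import Mathlib

open Set Filter MeasureTheory Topology

noncomputable section

/-- The β-transformation `x ↦ βx - ⌊βx⌋`. -/
def Tbeta (β x : ℝ) : ℝ := Int.fract (β * x)

/-- The survivor set `K_β(t)`: points of `[0,1)` whose orbit never enters `[0,t)`. -/
def survivor (β t : ℝ) : Set ℝ :=
  {x | x ∈ Set.Ico (0 : ℝ) 1 ∧ ∀ n : ℕ, t ≤ (Tbeta β)^[n] x}

/-- The set-valued bifurcation set `E_β`. -/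
def Ebif (β : ℝ) : Set ℝ :=
  {t | t ∈ Set.Ico (0 : ℝ) 1 ∧ ∀ t' : ℝ, t < t' → survivor β t' ≠ survivor β t}

/-- `(c)_β = Σ_{i≥1} c_i β^{-i}` for an infinite digit sequence (indexed from `0`). -/
def valSeq (β : ℝ) (c : ℕ → ℕ) : ℝ := ∑' i : ℕ, (c i : ℝ) / β ^ (i + 1)

/-- `(w 0^∞)_β` for a finite word `w`. -/
def valWord (β : ℝ) (w : List ℕ) : ℝ :=
  ∑ i ∈ Finset.range w.length, (w.getD i 0 : ℝ) / β ^ (i + 1)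

/-- `w⁺`: increment the last letter of `w`. -/
def wplus (w : List ℕ) : List ℕ := w.dropLast ++ [w.getLast! + 1]

/-- `w⁻`: decrement the last letter of `w`. -/
def wminus (w : List ℕ) : List ℕ := w.dropLast ++ [w.getLast! - 1]

/-- `θ`: increment every digit of `w` by one. -/
def theta (w : List ℕ) : List ℕ := w.map (· + 1)

/-- `L(w)`: the lexicographically largest cyclic permutation of `w`. -/
def maxCyc (w : List ℕ) : List ℕ := ((List.range w.length).map w.rotate).foldl max []

/-- `w^∞`: the periodic sequence with period block `w`. -/
def perSeq (w : List ℕ) : ℕ → ℕ := fun i => w.getD (i % w.length) 0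

/-- The sequence given by the word `w` followed by the sequence `c`. -/
def wordSeq (w : List ℕ) (c : ℕ → ℕ) : ℕ → ℕ :=
  fun i => if i < w.length then w.getD i 0 else c (i - w.length)

/-- Strict lexicographic order `≺` on sequences. -/
def seqLt (x y : ℕ → ℕ) : Prop := ∃ n, (∀ i < n, x i = y i) ∧ x n < y n

/-- Lexicographic order `≼` on sequences. -/
def seqLe (x y : ℕ → ℕ) : Prop := x = y ∨ seqLt x y

/-- The `n`-fold left shift `σⁿ` on sequences. -/
def shiftn (n : ℕ) (x : ℕ → ℕ) : ℕ → ℕ := fun i => x (i + n)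

/-- One step of the Farey recursion: insert the concatenation `w_i w_{i+1}`
between consecutive entries. -/
def fareyInsert : List (List ℕ) → List (List ℕ)
  | [] => []
  | [w] => [w]
  | w :: v :: rest => w :: (w ++ v) :: fareyInsert (v :: rest)

/-- The ordered set `F_n` of Farey words of level `n`. -/
def fareyLevel : ℕ → List (List ℕ)
  | 0 => [[0], [1]]
  | n + 1 => fareyInsert (fareyLevel n)

/-- `F`: all Farey words of length at least two. -/
def FareySet : Set (List ℕ) := {w | (∃ n, w ∈ fareyLevel n) ∧ w ≠ [0] ∧ w ≠ [1]}

/-- `F̂ = F ∪ {1}`. -/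
def FareyHat : Set (List ℕ) := FareySet ∪ {[1]}

/-- The extended Farey set `F_e = {θ^k(w) : w ∈ F̂, k ≥ 0}`. -/
def FareyExt : Set (List ℕ) := {w | ∃ v ∈ FareyHat, ∃ k : ℕ, w = theta^[k] v}

/-- A nonempty word is Lyndon iff it is strictly smaller than each of its nontrivial
cyclic rotations (equivalently: aperiodic and lexicographically smallest among its
cyclic permutations). -/
def IsLyndon (w : List ℕ) : Prop := w ≠ [] ∧ ∀ i, 0 < i → i < w.length → w < w.rotate i

/-- `L_e`: all Lyndon words over `ℕ ∪ {0}` except the single-letter word `0`. -/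
def LyndonExt : Set (List ℕ) := {w | IsLyndon w ∧ w ≠ [0]}

/-- `L`: Lyndon words over `{0,1}` of length at least `2`. -/
def LyndonBin : Set (List ℕ) := {w | IsLyndon w ∧ 2 ≤ w.length ∧ ∀ d ∈ w, d ≤ 1}

/-- The block of `Φ_s` emitted for current digit `d` after previous digit `p`:
`L(s)` for `00`, `s⁻` for `10`, `L(s)⁺` for `01`, `s` for `11`. -/
def phiBlock (s : List ℕ) (p d : ℕ) : List ℕ :=
  if d = 0 then (if p = 0 then maxCyc s else wminus s)
  else (if p = 0 then wplus (maxCyc s) else s)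

def phiAux (s : List ℕ) : ℕ → List ℕ → List ℕ
  | _, [] => []
  | p, d :: rest => phiBlock s p d ++ phiAux s d rest

/-- The substitution `Φ_s` on finite words; `s • r = subst s r`.  An initial digit `0`
produces `s⁻`, an initial digit `1` produces `L(s)⁺`, and thereafter runs
`0^k` resp. `1^l` produce `L(s)^{k-1}` resp. `s^{l-1}`, in accordance with
`Φ_s(0^{k₁}1^{l₁}…) = s⁻ L(s)^{k₁-1} L(s)⁺ s^{l₁-1} …` and
`Φ_s(1^{k₁}0^{l₁}…) = L(s)⁺ s^{k₁-1} s⁻ L(s)^{l₁-1} …`. -/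
def subst (s r : List ℕ) : List ℕ :=
  match r with
  | [] => []
  | d :: rest => phiBlock s (1 - d) d ++ phiAux s d rest

/-- The substitution `Φ_s` on infinite sequences, as the limit of its values
on initial segments (each digit contributes a nonempty block, so the `i`-th letter
is determined by the first `i+1` digits). -/
def phiSeq (s : List ℕ) (c : ℕ → ℕ) : ℕ → ℕ :=
  fun i => (subst s (List.ofFn fun j : Fin (i + 1) => c j)).getD i 0

/-- `Λ_e(m) = {s₁ • s₂ • … • s_m : s₁ ∈ F_e, s₂,…,s_m ∈ F}`. -/
def LambdaE (m : ℕ) : Set (List ℕ) :=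
  {w | ∃ s₁ ∈ FareyExt, ∃ rs : List (List ℕ),
    rs.length = m - 1 ∧ (∀ r ∈ rs, r ∈ FareySet) ∧ w = rs.foldl subst s₁}

/-- `Λ_e = ∪_{m≥1} Λ_e(m)`. -/
def LambdaExt : Set (List ℕ) := ⋃ m ∈ Set.Ici 1, LambdaE m

/-- `β_ℓ^S`: the base `β > 1` with `(L(S)^∞)_β = 1` (it is unique since
`β ↦ (c)_β` is strictly decreasing). -/
def betaL (S : List ℕ) : ℝ :=
  Classical.epsilon fun β : ℝ => 1 < β ∧ valSeq β (perSeq (maxCyc S)) = 1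

/-- `β_*^S`: the base `β > 1` with `(L(S)⁺ S⁻ L(S)^∞)_β = 1`. -/
def betaStar (S : List ℕ) : ℝ :=
  Classical.epsilon fun β : ℝ =>
    1 < β ∧ valSeq β (wordSeq (wplus (maxCyc S) ++ wminus S) (perSeq (maxCyc S))) = 1

/-- `β_r^S`: the base `β > 1` with `(L(S)⁺ S^∞)_β = 1`. -/
def betaR (S : List ℕ) : ℝ :=
  Classical.epsilon fun β : ℝ => 1 < β ∧ valSeq β (wordSeq (wplus (maxCyc S)) (perSeq S)) = 1

/-- The Lyndon/Farey interval `J^S = [β_ℓ^S, β_r^S]`. -/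
def Jint (S : List ℕ) : Set ℝ := Set.Icc (betaL S) (betaR S)

/-- The basic interval `I^S = [β_ℓ^S, β_*^S]`. -/
def Iint (S : List ℕ) : Set ℝ := Set.Icc (betaL S) (betaStar S)

/-- The exceptional set `E = (1,∞) ∖ ∪_{s ∈ F_e} J^s`. -/
def Eexc : Set ℝ := Set.Ioi 1 \ ⋃ s ∈ FareyExt, Jint s

/-- The relative exceptional set `E^S = (J^S ∖ I^S) ∖ ∪_{r ∈ F} J^{S•r}`. -/
def EexcRel (S : List ℕ) : Set ℝ :=
  (Jint S \ Iint S) \ ⋃ r ∈ FareySet, Jint (subst S r)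

/-- The infinitely renormalizable set `E_∞ = ∩_{m≥1} ∪_{S ∈ Λ_e(m)} J^S`. -/
def Einf : Set ℝ := ⋂ m ∈ Set.Ici 1, ⋃ S ∈ LambdaE m, Jint S

/-- `E_L = E ∪ {β_ℓ^s : s ∈ F_e}`. -/
def EL : Set ℝ := Eexc ∪ {x | ∃ s ∈ FareyExt, x = betaL s}

/-- The critical value `τ(β) = min{t > 0 : dim_H K_β(t) = 0}`. -/
def tau (β : ℝ) : ℝ := sInf {t : ℝ | 0 < t ∧ dimH (survivor β t) = 0}

end

/-!
The words of `F_e` are the Christoffel words of rational slopes `p / q > 0`; then `L(s)^∞` is the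
upper mechanical sequence of slope `p / q`, and `L(s)⁺ s^∞` is the limit of the upper mechanical
sequences whose slopes decrease to `p / q`. For fixed `β`, the value in base `β` of the upper
mechanical sequence of slope `ρ` is strictly increasing and left-continuous in `ρ`, and jumps only
at rational slopes. So either this value equals `1` for some `ρ > 0`, which happens exactly when
`β ∈ E_L`, or `1` is jumped over at a rational slope.

* If `1` is attained at `ρ`, a sequence all of whose blocks of length `n` have digit sum at most
  `⌈nρ⌉` has shifts of value at most `1`. A non-periodic point of `E_β` is a limit of periodic ones;
  a periodic one is a limit of points whose expansion starts with many periods and continues with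
  a lower mechanical sequence.
* If `1` is jumped over at `p / q`, the value of the lower mechanical sequence of slope `p / q` is
  an isolated point of `E_β`.

Every `ρ > 0` belongs to some `β ∈ E_L`, and only countably many of these are rational, so `E_L` is
uncountable. The first `n` digits of an upper mechanical sequence of bounded slope take `O(n²)`
values, and bases of `E_L` sharing them are exponentially close: the dimension is zero.
-/

/-! ### Values of digit sequences -/

/-- The sum of the first `n` digits of `c`. -/
def digitSum (c : ℕ → ℕ) (n : ℕ) : ℕ := ∑ i ∈ Finset.range n, c i

/-- The digits of `c` are bounded, so that `(c)_β` is a convergent series for every `β > 1`. -/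
def BddDigits (c : ℕ → ℕ) : Prop := ∃ D, ∀ i, c i ≤ D

section Values

variable {β : ℝ} {c d : ℕ → ℕ}

lemma digitSum_zero (c : ℕ → ℕ) : digitSum c 0 = 0 := rfl

lemma digitSum_succ (c : ℕ → ℕ) (n : ℕ) : digitSum c (n + 1) = digitSum c n + c n :=
  Finset.sum_range_succ _ _

lemma digitSum_add (c : ℕ → ℕ) (m n : ℕ) :
    digitSum c (m + n) = digitSum c m + digitSum (shiftn m c) n := by
  simp only [digitSum, Finset.sum_range_add, shiftn, add_comm]

lemma digitSum_congr {n : ℕ} (h : ∀ i < n, c i = d i) : digitSum c n = digitSum d n :=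
  Finset.sum_congr rfl fun i hi => h i (Finset.mem_range.1 hi)

lemma digitSum_injective : Function.Injective digitSum := fun c d h => by
  funext i
  have hsucc := congrFun h (i + 1)
  rw [digitSum_succ, digitSum_succ, h] at hsucc
  exact Nat.add_left_cancel hsucc

lemma shiftn_zero (c : ℕ → ℕ) : shiftn 0 c = c := rfl

lemma shiftn_shiftn (m n : ℕ) (c : ℕ → ℕ) : shiftn m (shiftn n c) = shiftn (m + n) c := by
  funext i
  simp only [shiftn, add_assoc]

lemma BddDigits.shiftn (hc : BddDigits c) (n : ℕ) : BddDigits (shiftn n c) :=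
  hc.imp fun _ hD _ => hD _

lemma summable_digits (hβ : 1 < β) (hc : BddDigits c) :
    Summable fun i : ℕ => (c i : ℝ) / β ^ (i + 1) := by
  obtain ⟨D, hD⟩ := hc
  have : 0 < β := by linarith
  have hgeom : Summable fun i : ℕ => (D : ℝ) * β⁻¹ ^ i :=
    (summable_geometric_of_lt_one (by positivity) (inv_lt_one_of_one_lt₀ hβ)).mul_left _
  refine hgeom.of_nonneg_of_le (fun i => by positivity) fun i => ?_
  rw [inv_pow, ← div_eq_mul_inv]
  have : (c i : ℝ) ≤ D := mod_cast hD i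
  gcongr
  exacts [hβ.le, i.le_succ]

lemma valSeq_nonneg (hβ : 1 < β) (c : ℕ → ℕ) : 0 ≤ valSeq β c := by
  have : 0 < β := by linarith
  exact tsum_nonneg fun i => by positivity

lemma valSeq_eq_sum_add_shiftn (hβ : 1 < β) (hc : BddDigits c) (n : ℕ) :
    valSeq β c = ∑ i ∈ Finset.range n, (c i : ℝ) / β ^ (i + 1)
      + valSeq β (shiftn n c) / β ^ n := by
  rw [valSeq, ← (summable_digits hβ hc).sum_add_tsum_nat_add n, valSeq, ← tsum_div_const]
  congr 1
  refine tsum_congr fun i => ?_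
  rw [shiftn, div_div, ← pow_add, add_right_comm]

lemma mul_valSeq (hβ : 1 < β) (hc : BddDigits c) :
    β * valSeq β c = c 0 + valSeq β (shiftn 1 c) := by
  rw [valSeq_eq_sum_add_shiftn hβ hc 1, Finset.sum_range_one, zero_add, pow_one]
  field_simp

lemma mul_valSeq_shiftn (hβ : 1 < β) (hc : BddDigits c) (n : ℕ) :
    β * valSeq β (shiftn n c) = c n + valSeq β (shiftn (n + 1) c) := by
  rw [mul_valSeq hβ (hc.shiftn n), shiftn_shiftn, add_comm 1 n, shiftn, zero_add]

lemma valSeq_sub_of_agree (hβ : 1 < β) (hc : BddDigits c) (hd : BddDigits d) {n : ℕ}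
    (h : ∀ i < n, c i = d i) :
    valSeq β c - valSeq β d = (valSeq β (shiftn n c) - valSeq β (shiftn n d)) / β ^ n := by
  have hsum : ∑ i ∈ Finset.range n, (c i : ℝ) / β ^ (i + 1)
      = ∑ i ∈ Finset.range n, (d i : ℝ) / β ^ (i + 1) :=
    Finset.sum_congr rfl fun i hi => by rw [h i (Finset.mem_range.1 hi)]
  rw [valSeq_eq_sum_add_shiftn hβ hc n, valSeq_eq_sum_add_shiftn hβ hd n, hsum]
  ring

lemma valSeq_sub_of_first_diff (hβ : 1 < β) (hc : BddDigits c) (hd : BddDigits d) {n : ℕ}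
    (h : ∀ i < n, c i = d i) :
    valSeq β c - valSeq β d = ((c n : ℝ) - d n + (valSeq β (shiftn (n + 1) c)
      - valSeq β (shiftn (n + 1) d))) / β ^ (n + 1) := by
  have : 0 < β := by linarith
  rw [valSeq_sub_of_agree hβ hc hd h, pow_succ, div_eq_div_iff (by positivity) (by positivity)]
  linear_combination β ^ n * mul_valSeq_shiftn hβ hc n - β ^ n * mul_valSeq_shiftn hβ hd n

lemma summable_digitSum (hβ : 1 < β) (hc : BddDigits c) :
    Summable fun n : ℕ => (digitSum c n : ℝ) / β ^ (n + 1) := by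
  obtain ⟨D, hD⟩ := hc
  have : 0 < β := by linarith
  have hnorm : ‖β⁻¹‖ < 1 := by
    rw [Real.norm_of_nonneg (by positivity)]
    exact inv_lt_one_of_one_lt₀ hβ
  have hlin : Summable fun n : ℕ => (D : ℝ) / β * ((n : ℝ) ^ 1 * β⁻¹ ^ n) :=
    (summable_pow_mul_geometric_of_norm_lt_one 1 hnorm).mul_left _
  refine hlin.of_nonneg_of_le (fun n => by positivity) fun n => ?_
  have hle : (digitSum c n : ℝ) ≤ n * D := mod_cast
    (Finset.sum_le_card_nsmul _ c D fun i _ => hD i).trans_eq (by simp)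
  calc (digitSum c n : ℝ) / β ^ (n + 1) ≤ n * D / β ^ (n + 1) := by gcongr
    _ = D / β * ((n : ℝ) ^ 1 * β⁻¹ ^ n) := by
      rw [inv_pow]
      field_simp
      ring

/-- Summation by parts. -/
lemma valSeq_eq_tsum_digitSum (hβ : 1 < β) (hc : BddDigits c) :
    valSeq β c = (β - 1) * ∑' n : ℕ, (digitSum c n : ℝ) / β ^ (n + 1) := by
  have : 0 < β := by linarith
  have hs := summable_digitSum hβ hc
  have hs' : Summable fun n : ℕ => (digitSum c (n + 1) : ℝ) / β ^ (n + 2) :=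
    (summable_nat_add_iff 1).2 hs
  have hshift : ∑' n : ℕ, (digitSum c n : ℝ) / β ^ (n + 1)
      = ∑' n : ℕ, (digitSum c (n + 1) : ℝ) / β ^ (n + 2) := by
    rw [hs.tsum_eq_zero_add]
    simp [digitSum_zero]
  have hdiff : valSeq β c = β * (∑' n : ℕ, (digitSum c (n + 1) : ℝ) / β ^ (n + 2))
      - ∑' n : ℕ, (digitSum c n : ℝ) / β ^ (n + 1) := by
    rw [← tsum_mul_left, ← (hs'.mul_left β).tsum_sub hs, valSeq]
    refine tsum_congr fun n => ?_
    rw [digitSum_succ]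
    push_cast
    field_simp
    ring
  rw [hdiff, ← hshift]
  ring

lemma valSeq_le_of_digitSum_le (hβ : 1 < β) (hc : BddDigits c) (hd : BddDigits d)
    (h : digitSum c ≤ digitSum d) : valSeq β c ≤ valSeq β d := by
  rw [valSeq_eq_tsum_digitSum hβ hc, valSeq_eq_tsum_digitSum hβ hd]
  have hterm : ∀ n, (digitSum c n : ℝ) / β ^ (n + 1) ≤ digitSum d n / β ^ (n + 1) := fun n => by
    have : (digitSum c n : ℝ) ≤ digitSum d n := mod_cast h n
    gcongr
  exact mul_le_mul_of_nonneg_left ((summable_digitSum hβ hc).tsum_le_tsum hterm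
    (summable_digitSum hβ hd)) (by linarith)

lemma valSeq_lt_of_digitSum_lt (hβ : 1 < β) (hc : BddDigits c) (hd : BddDigits d)
    (h : digitSum c < digitSum d) : valSeq β c < valSeq β d := by
  obtain ⟨hle, k, hk⟩ := Pi.lt_def.1 h
  rw [valSeq_eq_tsum_digitSum hβ hc, valSeq_eq_tsum_digitSum hβ hd]
  have hterm : ∀ n, (digitSum c n : ℝ) / β ^ (n + 1) ≤ digitSum d n / β ^ (n + 1) := fun n => by
    have : (digitSum c n : ℝ) ≤ digitSum d n := mod_cast hle n
    gcongr
  have hterm_k : (digitSum c k : ℝ) / β ^ (k + 1) < digitSum d k / β ^ (k + 1) := by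
    have : (digitSum c k : ℝ) < digitSum d k := mod_cast hk
    gcongr
  exact mul_lt_mul_of_pos_left (Summable.tsum_lt_tsum hterm hterm_k (summable_digitSum hβ hc)
    (summable_digitSum hβ hd)) (by linarith)

end Values

/-! ### Lexicographic comparison -/

section Lexicographic

variable {β : ℝ} {c d x : ℕ → ℕ}

lemma seqLt_or_seqLt_of_ne (h : c ≠ d) : seqLt c d ∨ seqLt d c := by
  classical
  have hne : ∃ k, c k ≠ d k := Function.ne_iff.1 h
  have hagree : ∀ i < Nat.find hne, c i = d i := fun i hi => not_not.1 (Nat.find_min hne hi)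
  exact (Nat.find_spec hne).lt_or_gt.imp (fun hlt => ⟨_, hagree, hlt⟩)
    fun hgt => ⟨_, fun i hi => (hagree i hi).symm, hgt⟩

lemma valSeq_le_of_seqLt (hβ : 1 < β) (hc : BddDigits c) (hd : BddDigits d)
    (htail : ∀ n, valSeq β (shiftn (n + 1) c) ≤ 1) (h : seqLt c d) : valSeq β c ≤ valSeq β d := by
  obtain ⟨k, hagree, hlt⟩ := h
  have : 0 < β := by linarith
  have hdigit : (c k : ℝ) + 1 ≤ d k := mod_cast hlt
  rw [← sub_nonneg, valSeq_sub_of_first_diff hβ hd hc fun i hi => (hagree i hi).symm]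
  exact div_nonneg (by linarith [htail k, valSeq_nonneg hβ (shiftn (k + 1) d)]) (by positivity)

lemma valSeq_lt_of_seqLt (hβ : 1 < β) (hc : BddDigits c) (hd : BddDigits d)
    (htail : ∀ n, valSeq β (shiftn (n + 1) c) < 1) (h : seqLt c d) : valSeq β c < valSeq β d := by
  obtain ⟨k, hagree, hlt⟩ := h
  have : 0 < β := by linarith
  have hdigit : (c k : ℝ) + 1 ≤ d k := mod_cast hlt
  rw [← sub_pos, valSeq_sub_of_first_diff hβ hd hc fun i hi => (hagree i hi).symm]
  exact div_pos (by linarith [htail k, valSeq_nonneg hβ (shiftn (k + 1) d)]) (by positivity)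

lemma seqLt_of_valSeq_lt (hβ : 1 < β) (hc : BddDigits c) (hd : BddDigits d)
    (htail : ∀ n, valSeq β (shiftn (n + 1) d) ≤ 1) (h : valSeq β c < valSeq β d) :
    seqLt c d :=
  (seqLt_or_seqLt_of_ne (ne_of_apply_ne _ h.ne)).resolve_right fun hlt =>
    h.not_ge (valSeq_le_of_seqLt hβ hd hc htail hlt)

lemma seqLe_of_valSeq_le (hβ : 1 < β) (hc : BddDigits c) (hd : BddDigits d)
    (htail : ∀ n, valSeq β (shiftn (n + 1) d) < 1) (h : valSeq β c ≤ valSeq β d) :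
    seqLe c d :=
  or_iff_not_imp_left.2 fun hne => (seqLt_or_seqLt_of_ne hne).resolve_right fun hlt =>
    h.not_gt (valSeq_lt_of_seqLt hβ hd hc htail hlt)

/- At the first difference the digit sum of `x` falls one behind that of `c`, which pays for the
defect `1` in the superadditivity of `digitSum c`. -/
lemma digitSum_le_of_forall_seqLe
    (hc : ∀ a b, digitSum c a + digitSum c b ≤ digitSum c (a + b) + 1)
    (hx : ∀ n, seqLe (shiftn n x) c) (n : ℕ) : digitSum x n ≤ digitSum c n := by
  induction n using Nat.strong_induction_on generalizing x with
  | _ n ih =>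
    rcases hx 0 with heq | ⟨k, hagree, hlt⟩
    · rw [← heq, shiftn_zero]
    rw [shiftn_zero] at hagree hlt
    rcases le_or_gt n k with hnk | hkn
    · exact (digitSum_congr fun i hi => hagree i (hi.trans_le hnk)).le
    obtain ⟨m, rfl⟩ := Nat.exists_eq_add_of_le (Nat.succ_le_of_lt hkn)
    have htail : digitSum (shiftn (k + 1) x) m ≤ digitSum c m :=
      ih m (by omega) fun j => shiftn_shiftn j _ x ▸ hx _
    have hsuper := hc (k + 1) m
    rw [Nat.succ_eq_add_one, digitSum_add x, digitSum_succ x, digitSum_congr hagree]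
    rw [digitSum_succ c k] at hsuper
    omega

lemma digitSum_le_of_forall_le_seqLe
    (hc : ∀ a b, digitSum c (a + 1 + b) ≤ digitSum c (a + 1) + digitSum c b + 1)
    (hx : ∀ n, seqLe c (shiftn n x)) (n : ℕ) : digitSum c n ≤ digitSum x n := by
  induction n using Nat.strong_induction_on generalizing x with
  | _ n ih =>
    rcases hx 0 with heq | ⟨k, hagree, hlt⟩
    · rw [heq, shiftn_zero]
    rw [shiftn_zero] at hagree hlt
    rcases le_or_gt n k with hnk | hkn
    · exact (digitSum_congr fun i hi => hagree i (hi.trans_le hnk)).le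
    obtain ⟨m, rfl⟩ := Nat.exists_eq_add_of_le (Nat.succ_le_of_lt hkn)
    have htail : digitSum c m ≤ digitSum (shiftn (k + 1) x) m :=
      ih m (by omega) fun j => shiftn_shiftn j _ x ▸ hx _
    have hsub := hc k m
    rw [Nat.succ_eq_add_one, digitSum_add x, digitSum_succ x, ← digitSum_congr hagree]
    rw [digitSum_succ c k] at hsub
    omega

end Lexicographic

/-! ### Greedy expansions -/

/-- The greedy digits of `x` in base `β`. -/
noncomputable def greedy (β x : ℝ) : ℕ → ℕ := fun i => ⌊β * (Tbeta β)^[i] x⌋₊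

section Greedy

variable {β x t : ℝ}

lemma Tbeta_iterate_mem (hx : x ∈ Ico (0 : ℝ) 1) (n : ℕ) : (Tbeta β)^[n] x ∈ Ico (0 : ℝ) 1 :=
  have hmaps : MapsTo (Tbeta β) (Ico 0 1) (Ico 0 1) := fun _ _ =>
    ⟨Int.fract_nonneg _, Int.fract_lt_one _⟩
  hmaps.iterate n hx

lemma cast_greedy (hβ : 1 < β) (hx : x ∈ Ico (0 : ℝ) 1) (i : ℕ) :
    (greedy β x i : ℝ) = β * (Tbeta β)^[i] x - (Tbeta β)^[i + 1] x := by
  have hnonneg : 0 ≤ β * (Tbeta β)^[i] x := mul_nonneg (by linarith) (Tbeta_iterate_mem hx i).1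
  rw [Function.iterate_succ_apply', Tbeta, Int.self_sub_fract, greedy,
    natCast_floor_eq_intCast_floor hnonneg]

lemma bddDigits_greedy (hβ : 1 < β) (hx : x ∈ Ico (0 : ℝ) 1) : BddDigits (greedy β x) :=
  ⟨⌊β⌋₊, fun i => Nat.floor_mono <|
    mul_le_of_le_one_right (by linarith) (Tbeta_iterate_mem hx i).2.le⟩

lemma shiftn_greedy (β x : ℝ) (n : ℕ) : shiftn n (greedy β x) = greedy β ((Tbeta β)^[n] x) := by
  funext i
  simp only [shiftn, greedy, ← Function.iterate_add_apply]

lemma sum_greedy (hβ : 1 < β) (hx : x ∈ Ico (0 : ℝ) 1) (n : ℕ) :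
    ∑ i ∈ Finset.range n, (greedy β x i : ℝ) / β ^ (i + 1) = x - (Tbeta β)^[n] x / β ^ n := by
  induction n with
  | zero => simp
  | succ n ih =>
    rw [Finset.sum_range_succ, ih, cast_greedy hβ hx]
    field_simp
    ring

lemma tendsto_div_pow_atTop (hβ : 1 < β) (C : ℝ) :
    Tendsto (fun n : ℕ => C / β ^ n) atTop (𝓝 0) :=
  tendsto_const_nhds.div_atTop (tendsto_pow_atTop_atTop_of_one_lt hβ)

lemma valSeq_greedy (hβ : 1 < β) (hx : x ∈ Ico (0 : ℝ) 1) : valSeq β (greedy β x) = x := by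
  have : 0 < β := by linarith
  have hrem : Tendsto (fun n : ℕ => (Tbeta β)^[n] x / β ^ n) atTop (𝓝 0) :=
    squeeze_zero (fun n => div_nonneg (Tbeta_iterate_mem hx n).1 (by positivity))
      (fun n => div_le_div_of_nonneg_right (Tbeta_iterate_mem hx n).2.le (by positivity))
      (tendsto_div_pow_atTop hβ 1)
  refine tendsto_nhds_unique (summable_digits hβ (bddDigits_greedy hβ hx)).hasSum.tendsto_sum_nat ?_
  simp_rw [sum_greedy hβ hx]
  simpa using tendsto_const_nhds.sub hrem

lemma valSeq_shiftn_greedy (hβ : 1 < β) (hx : x ∈ Ico (0 : ℝ) 1) (n : ℕ) :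
    valSeq β (shiftn n (greedy β x)) = (Tbeta β)^[n] x := by
  rw [shiftn_greedy, valSeq_greedy hβ (Tbeta_iterate_mem hx n)]

lemma Tbeta_iterate_valSeq {c : ℕ → ℕ} (hβ : 1 < β) (hc : BddDigits c)
    (hlt : ∀ n, valSeq β (shiftn n c) < 1) (n : ℕ) :
    (Tbeta β)^[n] (valSeq β c) = valSeq β (shiftn n c) := by
  induction n with
  | zero => rfl
  | succ n ih =>
    rw [Function.iterate_succ_apply', ih, Tbeta, mul_valSeq_shiftn hβ hc, Int.fract_natCast_add]
    exact Int.fract_eq_self.2 ⟨valSeq_nonneg hβ _, hlt _⟩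

end Greedy

/-! ### The bifurcation set -/

section Bifurcation

variable {β t : ℝ}

/- As long as the digits do not change, the iterates of `T_β` are affine. -/
lemma eventually_iterate_eq_of_floor_le {l : Filter ℝ} (hl : l ≤ 𝓝 t)
    (h : ∀ n, ∀ᶠ x in l, (⌊β * (Tbeta β)^[n] t⌋ : ℝ)
      ≤ β * ((Tbeta β)^[n] t + β ^ n * (x - t))) (n : ℕ) :
    ∀ᶠ x in l, (Tbeta β)^[n] x = (Tbeta β)^[n] t + β ^ n * (x - t) := by
  induction n with
  | zero => exact Eventually.of_forall fun x => by simp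
  | succ n ih =>
    have hcont : ContinuousAt (fun x => β * ((Tbeta β)^[n] t + β ^ n * (x - t))) t := by fun_prop
    have hup : ∀ᶠ x in l, β * ((Tbeta β)^[n] t + β ^ n * (x - t)) < ⌊β * (Tbeta β)^[n] t⌋ + 1 :=
      hl (hcont.eventually_lt_const (by simp))
    filter_upwards [ih, h n, hup] with x hx hfloor_le hlt
    have hfloor : ⌊β * ((Tbeta β)^[n] t + β ^ n * (x - t))⌋ = ⌊β * (Tbeta β)^[n] t⌋ :=
      Int.floor_eq_iff.2 ⟨hfloor_le, hlt⟩
    rw [Function.iterate_succ_apply', Function.iterate_succ_apply', hx, Tbeta, Tbeta,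
      ← Int.self_sub_floor, ← Int.self_sub_floor, hfloor]
    ring

lemma eventually_iterate_eq_nhdsGE (hβ : 1 < β) (t : ℝ) (n : ℕ) :
    ∀ᶠ x in 𝓝[≥] t, (Tbeta β)^[n] x = (Tbeta β)^[n] t + β ^ n * (x - t) := by
  refine eventually_iterate_eq_of_floor_le nhdsWithin_le_nhds (fun n => ?_) n
  filter_upwards [self_mem_nhdsWithin] with x hx
  have hslope : 0 ≤ β * (β ^ n * (x - t)) := by
    have : 0 < β := by linarith
    have : 0 ≤ x - t := sub_nonneg.2 hx
    positivity
  linarith [Int.floor_le (β * (Tbeta β)^[n] t)]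

lemma eventually_iterate_eq_nhds (ht : ∀ n, 0 < (Tbeta β)^[n + 1] t) (n : ℕ) :
    ∀ᶠ x in 𝓝 t, (Tbeta β)^[n] x = (Tbeta β)^[n] t + β ^ n * (x - t) := by
  refine eventually_iterate_eq_of_floor_le le_rfl (fun n => ?_) n
  have hcont : ContinuousAt (fun x => β * ((Tbeta β)^[n] t + β ^ n * (x - t))) t := by fun_prop
  have hfract := ht n
  rw [Function.iterate_succ_apply', Tbeta, ← Int.self_sub_floor, sub_pos] at hfract
  exact (hcont.eventually_const_lt (by simpa using hfract)).mono fun x hx => hx.le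

lemma mem_Ebif_iff (hβ : 1 < β) :
    t ∈ Ebif β ↔ t ∈ Ico (0 : ℝ) 1 ∧ ∀ n, t ≤ (Tbeta β)^[n] t := by
  refine and_congr_right fun ht => ⟨fun h n => ?_, fun h t' htt' heq => ?_⟩
  · by_contra! hlt
    have hcont : ContinuousAt (fun x => (Tbeta β)^[n] t + β ^ n * (x - t)) t := by fun_prop
    have hescape : ∀ᶠ x in 𝓝[≥] t, (Tbeta β)^[n] x < t := by
      filter_upwards [eventually_iterate_eq_nhdsGE hβ t n,
        nhdsWithin_le_nhds (hcont.eventually_lt_const (by simpa using hlt))] with x hx hxt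
      rwa [hx]
    obtain ⟨u, htu, hsub⟩ := (mem_nhdsGE_iff_exists_Ico_subset' (lt_add_one t)).1 hescape
    refine h u htu (Subset.antisymm (fun x hx => ⟨hx.1, fun m => htu.le.trans (hx.2 m)⟩)
      fun x hx => ⟨hx.1, fun m => ?_⟩)
    by_contra! hm
    have hstay := hx.2 (n + m)
    rw [Function.iterate_add_apply] at hstay
    exact hstay.not_gt (hsub ⟨hx.2 m, hm⟩)
  · have hmem : t ∈ survivor β t' := heq ▸ ⟨ht, h⟩
    exact (hmem.2 0).not_gt htt'

lemma valSeq_mem_Ebif {c : ℕ → ℕ} (hβ : 1 < β) (hc : BddDigits c)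
    (hlt : ∀ n, valSeq β (shiftn n c) < 1) (hle : ∀ n, valSeq β c ≤ valSeq β (shiftn n c)) :
    valSeq β c ∈ Ebif β :=
  (mem_Ebif_iff hβ).2 ⟨⟨valSeq_nonneg hβ c, hlt 0⟩, fun n =>
    (hle n).trans_eq (Tbeta_iterate_valSeq hβ hc hlt n).symm⟩

end Bifurcation

/-! ### Non-periodic points of the bifurcation set -/

/-- The periodic sequence repeating the first `n` terms of `c`; for `n = 0` it is `c` itself. -/
def periodize (c : ℕ → ℕ) (n : ℕ) : ℕ → ℕ := fun i => c (i % n)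

/-- The number whose expansion in base `β` repeats the first `n` greedy digits of `t`. -/
noncomputable def periodicApprox (β t : ℝ) (n : ℕ) : ℝ := valSeq β (periodize (greedy β t) n)

section NonPeriodic

variable {β t : ℝ} {n i : ℕ}

lemma BddDigits.periodize {c : ℕ → ℕ} (hc : BddDigits c) (n : ℕ) : BddDigits (periodize c n) :=
  hc.imp fun _ hD _ => hD _

lemma shiftn_periodize_mod (c : ℕ → ℕ) (n i : ℕ) :
    shiftn (i % n) (periodize c n) = shiftn i (periodize c n) := by
  funext j
  simp only [shiftn, periodize, Nat.add_mod_mod]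

lemma periodicApprox_sub_mul_pow (hβ : 1 < β) (ht : t ∈ Ico (0 : ℝ) 1) (hi : i ≤ n) :
    (periodicApprox β t n - t) * β ^ i
      = valSeq β (shiftn i (periodize (greedy β t) n)) - (Tbeta β)^[i] t := by
  have hd := bddDigits_greedy hβ ht
  have hsub := valSeq_sub_of_agree hβ (hd.periodize n) hd (n := i) fun j hj =>
    congrArg (greedy β t) (Nat.mod_eq_of_lt (hj.trans_le hi))
  rw [valSeq_greedy hβ ht, valSeq_shiftn_greedy hβ ht] at hsub
  rw [periodicApprox, hsub, div_mul_cancel₀ _ (pow_ne_zero _ (by linarith))]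

lemma periodicApprox_sub_mul_pow_self (hβ : 1 < β) (ht : t ∈ Ico (0 : ℝ) 1) (n : ℕ) :
    (periodicApprox β t n - t) * β ^ n = periodicApprox β t n - (Tbeta β)^[n] t := by
  rw [periodicApprox_sub_mul_pow hβ ht le_rfl, ← shiftn_periodize_mod, Nat.mod_self, shiftn_zero,
    periodicApprox]

lemma periodicApprox_lt (hβ : 1 < β) (ht : t ∈ Ico (0 : ℝ) 1) (hn : t < (Tbeta β)^[n] t) :
    periodicApprox β t n < t := by
  have hfix := periodicApprox_sub_mul_pow_self hβ ht n
  have hpow : 1 ≤ β ^ n := one_le_pow₀ hβ.le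
  nlinarith

lemma abs_periodicApprox_sub_le (hβ : 1 < β) (ht : t ∈ Ico (0 : ℝ) 1)
    (hn : t < (Tbeta β)^[n] t) : |periodicApprox β t n - t| ≤ 1 / β ^ n := by
  have : 0 < β := by linarith
  have hnonneg : 0 ≤ periodicApprox β t n := valSeq_nonneg hβ _
  rw [abs_sub_comm, abs_of_pos (sub_pos.2 (periodicApprox_lt hβ ht hn)),
    le_div_iff₀ (by positivity)]
  linarith [periodicApprox_sub_mul_pow_self hβ ht n, (Tbeta_iterate_mem (β := β) ht n).2]

/- For `0 < i < n` the inequality `x i ≤ x n` between periodic approximations is equivalent to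
`x n` not exceeding the value of the `i`-th shift of its own expansion. -/
lemma periodicApprox_mem_Ebif (hβ : 1 < β) (ht : t ∈ Ico (0 : ℝ) 1) (hn : 0 < n)
    (hlt : periodicApprox β t n < t)
    (hrec : ∀ i, 0 < i → i < n → periodicApprox β t i ≤ periodicApprox β t n) :
    periodicApprox β t n ∈ Ebif β := by
  have : 0 < β := by linarith
  refine valSeq_mem_Ebif hβ ((bddDigits_greedy hβ ht).periodize n) (fun j => ?_) fun j => ?_ <;>
    rw [← shiftn_periodize_mod] <;> have hi := Nat.mod_lt j hn <;> generalize j % n = i at hi ⊢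
  · have horb := periodicApprox_sub_mul_pow hβ ht hi.le
    have hneg : (periodicApprox β t n - t) * β ^ i ≤ 0 :=
      mul_nonpos_of_nonpos_of_nonneg (sub_nonpos.2 hlt.le) (by positivity)
    linarith [(Tbeta_iterate_mem (β := β) ht i).2]
  · rcases i.eq_zero_or_pos with rfl | hpos
    · rw [shiftn_zero]
    have horb := periodicApprox_sub_mul_pow hβ ht hi.le
    have hfix := periodicApprox_sub_mul_pow_self hβ ht i
    change periodicApprox β t n ≤ _
    nlinarith [hrec i hpos hi, one_le_pow₀ (n := i) hβ.le]

lemma accPt_of_not_periodic (hβ : 1 < β) (ht : t ∈ Ebif β)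
    (hper : ∀ m, 0 < m → (Tbeta β)^[m] t ≠ t) : AccPt t (𝓟 (Ebif β)) := by
  obtain ⟨htI, hmin⟩ := (mem_Ebif_iff hβ).1 ht
  have hlt_iterate : ∀ n, 0 < n → t < (Tbeta β)^[n] t := fun n hn =>
    (hmin n).lt_of_ne (hper n hn).symm
  have hlt : ∀ n, 0 < n → periodicApprox β t n < t := fun n hn =>
    periodicApprox_lt hβ htI (hlt_iterate n hn)
  have htends : Tendsto (periodicApprox β t) atTop (𝓝 t) := by
    refine tendsto_iff_dist_tendsto_zero.2 (squeeze_zero'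
      (Eventually.of_forall fun _ => dist_nonneg) ?_ (tendsto_div_pow_atTop hβ 1))
    filter_upwards [eventually_gt_atTop 0] with n hn
    exact abs_periodicApprox_sub_le hβ htI (hlt_iterate n hn)
  have hgap : Tendsto (fun n => t - periodicApprox β t n) atTop (𝓝[>] 0) := by
    refine tendsto_nhdsWithin_iff.2 ⟨by simpa using htends.const_sub t, ?_⟩
    filter_upwards [eventually_gt_atTop 0] with n hn using sub_pos.2 (hlt n hn)
  have hrecords := frequently_high_scores (tendsto_inv_nhdsGT_zero.comp hgap)
  refine accPt_iff_frequently.2 (htends.frequently ?_)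
  refine (hrecords.and_eventually (eventually_gt_atTop 0)).mono fun n ⟨hrec, hn⟩ => ?_
  refine ⟨(hlt n hn).ne, periodicApprox_mem_Ebif hβ htI hn (hlt n hn) fun i hi hin => ?_⟩
  have := (inv_lt_inv₀ (sub_pos.2 (hlt i hi)) (sub_pos.2 (hlt n hn))).1 (hrec i hin)
  linarith

end NonPeriodic

/-! ### Mechanical sequences -/

/-- The sequence of increments of `S`. -/
def diffSeq (S : ℕ → ℕ) : ℕ → ℕ := fun i => S (i + 1) - S i

/-- The digit sums `⌈nρ⌉` of the upper mechanical sequence. -/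
noncomputable def ceilSum (ρ : ℝ) (n : ℕ) : ℕ := ⌈n * ρ⌉₊

/-- The digit sums `⌊nρ⌋` of the lower mechanical sequence. -/
noncomputable def floorSum (ρ : ℝ) (n : ℕ) : ℕ := ⌊n * ρ⌋₊

/-- The limit of `ceilSum` as the slope decreases to `ρ`. -/
noncomputable def ceilSumRight (ρ : ℝ) (n : ℕ) : ℕ := if n = 0 then 0 else ⌊n * ρ⌋₊ + 1

/-- The limit of `floorSum` as the slope increases to `ρ`. -/
noncomputable def floorSumLeft (ρ : ℝ) (n : ℕ) : ℕ := ⌈n * ρ⌉₊ - 1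

/-- The upper mechanical sequence of slope `ρ`. -/
noncomputable def upperMech (ρ : ℝ) : ℕ → ℕ := diffSeq (ceilSum ρ)

/-- The lower mechanical sequence of slope `ρ`. -/
noncomputable def lowerMech (ρ : ℝ) : ℕ → ℕ := diffSeq (floorSum ρ)

/-- The limit of the upper mechanical sequences as the slope decreases to `ρ`. -/
noncomputable def upperMechRight (ρ : ℝ) : ℕ → ℕ := diffSeq (ceilSumRight ρ)

/-- The limit of the lower mechanical sequences as the slope increases to `ρ`. -/
noncomputable def lowerMechLeft (ρ : ℝ) : ℕ → ℕ := diffSeq (floorSumLeft ρ)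

section Mechanical

variable {β ρ : ℝ}

lemma digitSum_diffSeq {S : ℕ → ℕ} (h0 : S 0 = 0) (hS : Monotone S) : digitSum (diffSeq S) = S := by
  funext n
  induction n with
  | zero => rw [digitSum_zero, h0]
  | succ n ih => rw [digitSum_succ, ih, diffSeq, Nat.add_sub_of_le (hS n.le_succ)]

lemma ceilSum_monotone (hρ : 0 ≤ ρ) : Monotone (ceilSum ρ) := fun m n h => by
  unfold ceilSum
  gcongr

lemma floorSum_monotone (hρ : 0 ≤ ρ) : Monotone (floorSum ρ) := fun m n h => by
  unfold floorSum
  gcongr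

lemma ceilSumRight_monotone (hρ : 0 ≤ ρ) : Monotone (ceilSumRight ρ) := fun m n h => by
  have hfloor : ⌊m * ρ⌋₊ ≤ ⌊n * ρ⌋₊ := floorSum_monotone hρ h
  unfold ceilSumRight
  split_ifs <;> omega

lemma floorSumLeft_monotone (hρ : 0 ≤ ρ) : Monotone (floorSumLeft ρ) := fun _ _ h =>
  Nat.sub_le_sub_right (ceilSum_monotone hρ h) 1

lemma digitSum_upperMech (hρ : 0 ≤ ρ) : digitSum (upperMech ρ) = ceilSum ρ :=
  digitSum_diffSeq (by simp [ceilSum]) (ceilSum_monotone hρ)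

lemma digitSum_lowerMech (hρ : 0 ≤ ρ) : digitSum (lowerMech ρ) = floorSum ρ :=
  digitSum_diffSeq (by simp [floorSum]) (floorSum_monotone hρ)

lemma digitSum_upperMechRight (hρ : 0 ≤ ρ) : digitSum (upperMechRight ρ) = ceilSumRight ρ :=
  digitSum_diffSeq (by simp [ceilSumRight]) (ceilSumRight_monotone hρ)

lemma digitSum_lowerMechLeft (hρ : 0 ≤ ρ) : digitSum (lowerMechLeft ρ) = floorSumLeft ρ :=
  digitSum_diffSeq (by simp [floorSumLeft]) (floorSumLeft_monotone hρ)

lemma ceilSum_add_le (a b : ℕ) : ceilSum ρ (a + b) ≤ ceilSum ρ a + ceilSum ρ b := by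
  simpa only [ceilSum, Nat.cast_add, add_mul] using Nat.ceil_add_le (a * ρ) (b * ρ)

lemma ceilSum_add_ceilSum_le (hρ : 0 ≤ ρ) (a b : ℕ) :
    ceilSum ρ a + ceilSum ρ b ≤ ceilSum ρ (a + b) + 1 := by
  have ha := Nat.ceil_lt_add_one (show 0 ≤ a * ρ by positivity)
  have hb := Nat.ceil_lt_add_one (show 0 ≤ b * ρ by positivity)
  have hab := Nat.le_ceil ((a + b : ℕ) * ρ)
  push_cast at hab
  refine Nat.lt_succ_iff.1 ((Nat.cast_lt (α := ℝ)).1 ?_)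
  simp only [ceilSum, Nat.succ_eq_add_one]
  push_cast
  linarith

lemma floorSum_add_floorSum_le (hρ : 0 ≤ ρ) (a b : ℕ) :
    floorSum ρ a + floorSum ρ b ≤ floorSum ρ (a + b) := by
  have ha := Nat.floor_le (show 0 ≤ a * ρ by positivity)
  have hb := Nat.floor_le (show 0 ≤ b * ρ by positivity)
  refine Nat.le_floor ?_
  simp only [floorSum]
  push_cast
  linarith

lemma floorSum_add_le (hρ : 0 ≤ ρ) (a b : ℕ) :
    floorSum ρ (a + b) ≤ floorSum ρ a + ceilSum ρ b := by
  have hle := Nat.le_ceil (b * ρ)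
  calc floorSum ρ (a + b) ≤ ⌊a * ρ + (⌈b * ρ⌉₊ : ℕ)⌋₊ := by
        simp only [floorSum, Nat.cast_add, add_mul]
        gcongr
    _ = floorSum ρ a + ceilSum ρ b := Nat.floor_add_natCast (by positivity) _

lemma ceilSum_add_floorSum_le {ρ' : ℝ} (hρ' : 0 ≤ ρ') (h : ρ' ≤ ρ) (a b : ℕ) :
    ceilSum ρ a + floorSum ρ' b ≤ ceilSum ρ (a + b) := by
  have hρ : 0 ≤ ρ := hρ'.trans h
  have hle : (⌊b * ρ'⌋₊ : ℝ) ≤ b * ρ := (Nat.floor_le (by positivity)).trans (by gcongr)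
  calc ceilSum ρ a + floorSum ρ' b = ⌈a * ρ + (⌊b * ρ'⌋₊ : ℕ)⌉₊ :=
        (Nat.ceil_add_natCast (by positivity) _).symm
    _ ≤ ceilSum ρ (a + b) := by
        simp only [ceilSum, Nat.cast_add, add_mul]
        gcongr

lemma ceilSum_pos (hρ : 0 < ρ) {n : ℕ} (hn : 0 < n) : 0 < ceilSum ρ n :=
  Nat.ceil_pos.2 (by positivity)

lemma ceilSum_one (ρ : ℝ) : ceilSum ρ 1 = ⌈ρ⌉₊ := by rw [ceilSum, Nat.cast_one, one_mul]

lemma upperMech_le (ρ : ℝ) (i : ℕ) : upperMech ρ i ≤ ⌈ρ⌉₊ :=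
  Nat.sub_le_iff_le_add'.2 (ceilSum_one ρ ▸ ceilSum_add_le i 1)

lemma lowerMech_le (hρ : 0 ≤ ρ) (i : ℕ) : lowerMech ρ i ≤ ⌈ρ⌉₊ :=
  Nat.sub_le_iff_le_add'.2 (ceilSum_one ρ ▸ floorSum_add_le hρ i 1)

lemma upperMechRight_zero (ρ : ℝ) : upperMechRight ρ 0 = ⌊ρ⌋₊ + 1 := by
  simp [upperMechRight, diffSeq, ceilSumRight]

lemma upperMechRight_succ (ρ : ℝ) (n : ℕ) : upperMechRight ρ (n + 1) = lowerMech ρ (n + 1) := by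
  simp [upperMechRight, lowerMech, diffSeq, ceilSumRight, floorSum]

lemma lowerMechLeft_zero (ρ : ℝ) : lowerMechLeft ρ 0 = ⌈ρ⌉₊ - 1 := by
  simp [lowerMechLeft, diffSeq, floorSumLeft]

lemma lowerMechLeft_succ (hρ : 0 < ρ) (n : ℕ) : lowerMechLeft ρ (n + 1) = upperMech ρ (n + 1) := by
  have : 1 ≤ ceilSum ρ (n + 1) := ceilSum_pos hρ n.succ_pos
  simp only [lowerMechLeft, upperMech, diffSeq, floorSumLeft, ceilSum] at this ⊢
  omega

lemma shiftn_upperMechRight (ρ : ℝ) (n : ℕ) :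
    shiftn (n + 1) (upperMechRight ρ) = shiftn (n + 1) (lowerMech ρ) :=
  funext fun _ => upperMechRight_succ ρ _

lemma shiftn_lowerMechLeft (hρ : 0 < ρ) :
    shiftn 1 (lowerMechLeft ρ) = shiftn 1 (upperMech ρ) :=
  funext fun _ => lowerMechLeft_succ hρ _

lemma bddDigits_upperMech (ρ : ℝ) : BddDigits (upperMech ρ) := ⟨_, upperMech_le ρ⟩

lemma bddDigits_lowerMech (hρ : 0 ≤ ρ) : BddDigits (lowerMech ρ) := ⟨_, lowerMech_le hρ⟩

lemma bddDigits_upperMechRight (hρ : 0 ≤ ρ) : BddDigits (upperMechRight ρ) := by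
  refine ⟨⌈ρ⌉₊ + 1, fun i => ?_⟩
  cases i with
  | zero => exact (upperMechRight_zero ρ).trans_le (Nat.succ_le_succ (Nat.floor_le_ceil ρ))
  | succ n => exact (upperMechRight_succ ρ n).trans_le ((lowerMech_le hρ _).trans (Nat.le_succ _))

lemma bddDigits_lowerMechLeft (hρ : 0 < ρ) : BddDigits (lowerMechLeft ρ) := by
  refine ⟨⌈ρ⌉₊, fun i => ?_⟩
  cases i with
  | zero => exact (lowerMechLeft_zero ρ).trans_le (Nat.sub_le _ _)
  | succ n => exact (lowerMechLeft_succ hρ n).trans_le (upperMech_le ρ _)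

lemma digitSum_shiftn_upperMech_le (hρ : 0 ≤ ρ) (m : ℕ) :
    digitSum (shiftn m (upperMech ρ)) ≤ digitSum (upperMech ρ) := fun n => by
  have hadd := digitSum_add (upperMech ρ) m n
  rw [digitSum_upperMech hρ] at hadd ⊢
  exact Nat.le_of_add_le_add_left (hadd.symm.trans_le (ceilSum_add_le m n))

lemma digitSum_shiftn_lowerMech_le (hρ : 0 ≤ ρ) (m : ℕ) :
    digitSum (shiftn m (lowerMech ρ)) ≤ digitSum (upperMech ρ) := fun n => by
  have hadd := digitSum_add (lowerMech ρ) m n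
  rw [digitSum_lowerMech hρ] at hadd
  rw [digitSum_upperMech hρ]
  exact Nat.le_of_add_le_add_left (hadd.symm.trans_le (floorSum_add_le hρ m n))

lemma le_digitSum_shiftn_lowerMech (hρ : 0 ≤ ρ) (m : ℕ) :
    digitSum (lowerMech ρ) ≤ digitSum (shiftn m (lowerMech ρ)) := fun n => by
  have hadd := digitSum_add (lowerMech ρ) m n
  rw [digitSum_lowerMech hρ] at hadd ⊢
  exact Nat.le_of_add_le_add_left ((floorSum_add_floorSum_le hρ m n).trans_eq hadd)

lemma valSeq_shiftn_upperMech_le (hβ : 1 < β) (hρ : 0 ≤ ρ) (m : ℕ) :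
    valSeq β (shiftn m (upperMech ρ)) ≤ valSeq β (upperMech ρ) :=
  valSeq_le_of_digitSum_le hβ ((bddDigits_upperMech ρ).shiftn m) (bddDigits_upperMech ρ)
    (digitSum_shiftn_upperMech_le hρ m)

lemma valSeq_shiftn_lowerMech_le (hβ : 1 < β) (hρ : 0 ≤ ρ) (m : ℕ) :
    valSeq β (shiftn m (lowerMech ρ)) ≤ valSeq β (upperMech ρ) :=
  valSeq_le_of_digitSum_le hβ ((bddDigits_lowerMech hρ).shiftn m) (bddDigits_upperMech ρ)
    (digitSum_shiftn_lowerMech_le hρ m)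

lemma le_valSeq_shiftn_lowerMech (hβ : 1 < β) (hρ : 0 ≤ ρ) (m : ℕ) :
    valSeq β (lowerMech ρ) ≤ valSeq β (shiftn m (lowerMech ρ)) :=
  valSeq_le_of_digitSum_le hβ (bddDigits_lowerMech hρ) ((bddDigits_lowerMech hρ).shiftn m)
    (le_digitSum_shiftn_lowerMech hρ m)

end Mechanical

/-! ### Limits of mechanical sequences in the slope -/

section SlopeLimits

variable {β ρ : ℝ}

lemma tendsto_valSeq {ι : Type*} {l : Filter ι} {c : ι → ℕ → ℕ} {d : ℕ → ℕ} {D : ℕ} (hβ : 1 < β)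
    (hD : ∀ᶠ r in l, ∀ i, c r i ≤ D) (h : ∀ i, ∀ᶠ r in l, c r i = d i) :
    Tendsto (fun r => valSeq β (c r)) l (𝓝 (valSeq β d)) := by
  have : 0 < β := by linarith
  refine tendsto_tsum_of_dominated_convergence
    (summable_digits (c := fun _ => D) hβ ⟨D, fun _ => le_rfl⟩) (fun i => ?_) ?_
  · exact tendsto_const_nhds.congr' ((h i).mono fun r hr => by simp only [hr])
  · filter_upwards [hD] with r hr i
    rw [Real.norm_of_nonneg (by positivity)]
    have : (c r i : ℝ) ≤ D := mod_cast hr i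
    gcongr

lemma eventually_diffSeq_eq {ι : Type*} {l : Filter ι} {S : ι → ℕ → ℕ} {R : ℕ → ℕ}
    (h : ∀ n, ∀ᶠ r in l, S r n = R n) (i : ℕ) : ∀ᶠ r in l, diffSeq (S r) i = diffSeq R i := by
  filter_upwards [h i, h (i + 1)] with r hi hsucc
  rw [diffSeq, diffSeq, hi, hsucc]

lemma tendsto_natCast_mul_nhdsLT (ρ : ℝ) {n : ℕ} (hn : 0 < n) :
    Tendsto (fun r : ℝ => n * r) (𝓝[<] ρ) (𝓝[<] (n * ρ)) :=
  ContinuousWithinAt.tendsto_nhdsWithin (by fun_prop) fun _ (hr : _ < _) =>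
    mul_lt_mul_of_pos_left (α := ℝ) hr (Nat.cast_pos.2 hn)

lemma tendsto_natCast_mul_nhdsGT (ρ : ℝ) {n : ℕ} (hn : 0 < n) :
    Tendsto (fun r : ℝ => n * r) (𝓝[>] ρ) (𝓝[>] (n * ρ)) :=
  ContinuousWithinAt.tendsto_nhdsWithin (by fun_prop) fun _ (hr : _ < _) =>
    mul_lt_mul_of_pos_left (α := ℝ) hr (Nat.cast_pos.2 hn)

lemma eventually_floorSum_eq_nhdsLT (ρ : ℝ) (n : ℕ) :
    ∀ᶠ r in 𝓝[<] ρ, floorSum r n = floorSumLeft ρ n := by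
  rcases n.eq_zero_or_pos with rfl | hn
  · simp [floorSum, floorSumLeft]
  have hfloor := tendsto_pure.1
    ((tendsto_floor_left_pure_ceil_sub_one (n * ρ)).comp (tendsto_natCast_mul_nhdsLT ρ hn))
  filter_upwards [hfloor] with r hr
  have hr : ⌊n * r⌋ = ⌈n * ρ⌉ - 1 := hr
  rw [floorSum, floorSumLeft, ← Int.floor_toNat, hr, ← Int.ceil_toNat, Int.pred_toNat]

lemma eventually_ceilSum_eq_nhdsLT (ρ : ℝ) (n : ℕ) :
    ∀ᶠ r in 𝓝[<] ρ, ceilSum r n = ceilSum ρ n := by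
  rcases n.eq_zero_or_pos with rfl | hn
  · simp [ceilSum]
  have hceil := tendsto_pure.1 ((tendsto_ceil_left_pure_ceil (n * ρ)).comp
    ((tendsto_natCast_mul_nhdsLT ρ hn).mono_right (nhdsWithin_mono _ Iio_subset_Iic_self)))
  filter_upwards [hceil] with r hr
  have hr : ⌈n * r⌉ = ⌈n * ρ⌉ := hr
  rw [ceilSum, ceilSum, ← Int.ceil_toNat, hr, Int.ceil_toNat]

lemma eventually_ceilSum_eq_nhdsGT (hρ : 0 ≤ ρ) (n : ℕ) :
    ∀ᶠ r in 𝓝[>] ρ, ceilSum r n = ceilSumRight ρ n := by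
  rcases n.eq_zero_or_pos with rfl | hn
  · simp [ceilSum, ceilSumRight]
  have hceil := tendsto_pure.1
    ((tendsto_ceil_right_pure_floor_add_one (n * ρ)).comp (tendsto_natCast_mul_nhdsGT ρ hn))
  filter_upwards [hceil] with r hr
  have hr : ⌈n * r⌉ = ⌊n * ρ⌋ + 1 := hr
  rw [ceilSum, ceilSumRight, if_neg hn.ne', ← Int.ceil_toNat, hr,
    Int.toNat_add (Int.floor_nonneg.2 (by positivity)) zero_le_one, Int.floor_toNat]
  rfl

lemma tendsto_valSeq_lowerMech_nhdsLT (hβ : 1 < β) (hρ : 0 < ρ) :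
    Tendsto (fun r => valSeq β (lowerMech r)) (𝓝[<] ρ) (𝓝 (valSeq β (lowerMechLeft ρ))) := by
  refine tendsto_valSeq (D := ⌈ρ⌉₊) hβ ?_ (eventually_diffSeq_eq (eventually_floorSum_eq_nhdsLT ρ))
  filter_upwards [nhdsWithin_le_nhds (lt_mem_nhds hρ), self_mem_nhdsWithin] with r hr_pos hr i
  exact (lowerMech_le hr_pos.le i).trans (Nat.ceil_mono (le_of_lt hr))

lemma tendsto_valSeq_upperMech_nhdsLT (hβ : 1 < β) (ρ : ℝ) :
    Tendsto (fun r => valSeq β (upperMech r)) (𝓝[<] ρ) (𝓝 (valSeq β (upperMech ρ))) := by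
  refine tendsto_valSeq (D := ⌈ρ⌉₊) hβ ?_ (eventually_diffSeq_eq (eventually_ceilSum_eq_nhdsLT ρ))
  filter_upwards [self_mem_nhdsWithin] with r hr i
  exact (upperMech_le r i).trans (Nat.ceil_mono (le_of_lt hr))

lemma tendsto_valSeq_upperMech_nhdsGT (hβ : 1 < β) (hρ : 0 ≤ ρ) :
    Tendsto (fun r => valSeq β (upperMech r)) (𝓝[>] ρ) (𝓝 (valSeq β (upperMechRight ρ))) := by
  refine tendsto_valSeq (D := ⌈ρ + 1⌉₊) hβ ?_
    (eventually_diffSeq_eq (eventually_ceilSum_eq_nhdsGT hρ))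
  filter_upwards [nhdsWithin_le_nhds (gt_mem_nhds (lt_add_one ρ))] with r hr i
  exact (upperMech_le r i).trans (Nat.ceil_mono (le_of_lt hr))

end SlopeLimits

/-! ### Bases in which `1` has an upper mechanical expansion -/

/-- The first `n` digits of `c` followed by the sequence `u`. -/
def splice (c : ℕ → ℕ) (n : ℕ) (u : ℕ → ℕ) : ℕ → ℕ := fun i => if i < n then c i else u (i - n)

section Splice

variable {β : ℝ} {c u : ℕ → ℕ}

lemma BddDigits.splice (hc : BddDigits c) (hu : BddDigits u) (n : ℕ) :
    BddDigits (splice c n u) := by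
  obtain ⟨C, hC⟩ := hc
  obtain ⟨U, hU⟩ := hu
  refine ⟨max C U, fun i => ?_⟩
  unfold _root_.splice
  split_ifs
  exacts [le_max_of_le_left (hC _), le_max_of_le_right (hU _)]

lemma splice_of_lt (c u : ℕ → ℕ) {n i : ℕ} (hi : i < n) : splice c n u i = c i := if_pos hi

lemma shiftn_splice_of_le (c u : ℕ → ℕ) {n i : ℕ} (hi : i ≤ n) :
    shiftn i (splice c n u) = splice (shiftn i c) (n - i) u := by
  funext j
  simp only [shiftn, splice, Nat.lt_sub_iff_add_lt]
  rw [show j + i - n = j - (n - i) by omega]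

lemma shiftn_add_splice (c u : ℕ → ℕ) (n i : ℕ) :
    shiftn (n + i) (splice c n u) = shiftn i u := by
  funext j
  simp only [shiftn, splice]
  rw [if_neg (by omega), show j + (n + i) - n = j + i by omega]

lemma shiftn_self_splice (c u : ℕ → ℕ) (n : ℕ) : shiftn n (splice c n u) = u :=
  shiftn_add_splice c u n 0

lemma digitSum_splice_of_le (c u : ℕ → ℕ) {n k : ℕ} (hk : k ≤ n) :
    digitSum (splice c n u) k = digitSum c k :=
  digitSum_congr fun _ hi => splice_of_lt c u (hi.trans_le hk)

lemma digitSum_splice_add (c u : ℕ → ℕ) (n k : ℕ) :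
    digitSum (splice c n u) (n + k) = digitSum c n + digitSum u k := by
  rw [digitSum_add, digitSum_splice_of_le c u le_rfl, shiftn_self_splice]

lemma valSeq_splice_greedy {x : ℝ} (hβ : 1 < β) (hx : x ∈ Ico (0 : ℝ) 1) (hu : BddDigits u)
    (n : ℕ) :
    valSeq β (splice (greedy β x) n u) = x + (valSeq β u - (Tbeta β)^[n] x) / β ^ n := by
  have hd := bddDigits_greedy hβ hx
  have hsub := valSeq_sub_of_agree hβ (hd.splice hu n) hd fun _ hi => splice_of_lt _ u hi
  rw [shiftn_self_splice, valSeq_greedy hβ hx, valSeq_shiftn_greedy hβ hx] at hsub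
  linarith

end Splice

section SlopeComparison

variable {β r ρ : ℝ}

lemma exists_natCast_mul_add_one_le (h : r < ρ) : ∃ n : ℕ, n * r + 1 ≤ n * ρ := by
  obtain ⟨n, hn⟩ := exists_nat_ge (1 / (ρ - r))
  rw [div_le_iff₀ (sub_pos.2 h)] at hn
  exact ⟨n, by linarith⟩

lemma floorSum_lt_floorSum (hr : 0 ≤ r) (h : r < ρ) : floorSum r < floorSum ρ := by
  obtain ⟨n, hn⟩ := exists_natCast_mul_add_one_le h
  refine Pi.lt_def.2 ⟨fun k => Nat.floor_mono (by gcongr), n, ?_⟩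
  rw [← Nat.add_one_le_iff, floorSum, ← Nat.floor_add_one (by positivity)]
  exact Nat.floor_mono hn

lemma ceilSum_lt_ceilSum (hr : 0 ≤ r) (h : r < ρ) : ceilSum r < ceilSum ρ := by
  obtain ⟨n, hn⟩ := exists_natCast_mul_add_one_le h
  refine Pi.lt_def.2 ⟨fun k => Nat.ceil_mono (by gcongr), n, ?_⟩
  rw [← Nat.add_one_le_iff, ceilSum, ← Nat.ceil_add_one (by positivity)]
  exact Nat.ceil_mono hn

lemma valSeq_upperMech_strictMonoOn (hβ : 1 < β) :
    StrictMonoOn (fun ρ => valSeq β (upperMech ρ)) (Ici 0) := fun r hr ρ hρ h => by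
  refine valSeq_lt_of_digitSum_lt hβ (bddDigits_upperMech r) (bddDigits_upperMech ρ) ?_
  rw [digitSum_upperMech hr, digitSum_upperMech hρ]
  exact ceilSum_lt_ceilSum hr h

lemma digitSum_splice_lowerMech_lt {c : ℕ → ℕ} (hr : 0 ≤ r) (h : r < ρ)
    (hc : digitSum c ≤ ceilSum ρ) (n : ℕ) :
    digitSum (splice c n (lowerMech r)) < ceilSum ρ := by
  have hρ : 0 ≤ ρ := hr.trans h.le
  obtain ⟨-, k, hk⟩ := Pi.lt_def.1 (floorSum_lt_floorSum hr h)
  refine Pi.lt_def.2 ⟨fun j => ?_, n + k, ?_⟩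
  · rcases le_total j n with hj | hj
    · exact (digitSum_splice_of_le c _ hj).trans_le (hc j)
    · obtain ⟨i, rfl⟩ := Nat.exists_eq_add_of_le hj
      rw [digitSum_splice_add, digitSum_lowerMech hr]
      exact (Nat.add_le_add_right (hc n) _).trans (ceilSum_add_floorSum_le hr h.le n i)
  · rw [digitSum_splice_add, digitSum_lowerMech hr]
    exact (Nat.add_lt_add_of_le_of_lt (hc n) hk).trans_le (ceilSum_add_floorSum_le hρ le_rfl n k)

end SlopeComparison

section PeriodicDigits

variable {c : ℕ → ℕ} {m : ℕ} {ρ : ℝ}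

lemma digitSum_add_period (hper : shiftn m c = c) (n : ℕ) :
    digitSum c (n + m) = digitSum c n + digitSum c m := by
  rw [add_comm n, digitSum_add, hper, add_comm]

lemma digitSum_mul_period (hper : shiftn m c = c) (j : ℕ) :
    digitSum c (j * m) = j * digitSum c m := by
  induction j with
  | zero => rw [zero_mul, zero_mul, digitSum_zero]
  | succ j ih => rw [Nat.succ_mul, digitSum_add_period hper, ih, Nat.succ_mul]

lemma eq_zero_of_forall_abs_natCast_mul_le {a C : ℝ} (h : ∀ j : ℕ, |j * a| ≤ C) : a = 0 := by
  by_contra ha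
  obtain ⟨j, hj⟩ := exists_nat_gt (C / |a|)
  have hbound := h j
  rw [div_lt_iff₀ (abs_pos.2 ha)] at hj
  rw [abs_mul, Nat.abs_cast] at hbound
  linarith

lemma digitSum_period_eq_mul {C : ℝ} (hper : shiftn m c = c)
    (hbound : ∀ n : ℕ, |digitSum c n - n * ρ| ≤ C) : (digitSum c m : ℝ) = m * ρ := by
  refine sub_eq_zero.1 (eq_zero_of_forall_abs_natCast_mul_le (C := C) fun j => ?_)
  have hj := hbound (j * m)
  rw [digitSum_mul_period hper] at hj
  push_cast at hj
  rwa [mul_sub, ← mul_assoc]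

/- The defect `digitSum c n - nρ` is periodic in `n`: shift to where it is minimal. -/
lemma exists_ceilSum_le_digitSum_shiftn (hm : 0 < m) (hper : shiftn m c = c)
    (hslope : (digitSum c m : ℝ) = m * ρ) : ∃ i, ceilSum ρ ≤ digitSum (shiftn i c) := by
  have hdefect : Function.Periodic (fun n : ℕ => (digitSum c n : ℝ) - n * ρ) m := fun n => by
    simp only [digitSum_add_period hper]
    push_cast
    linarith
  obtain ⟨i, -, hi⟩ := Finset.exists_min_image (Finset.range m)
    (fun n : ℕ => (digitSum c n : ℝ) - n * ρ) ⟨0, Finset.mem_range.2 hm⟩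
  refine ⟨i, fun n => Nat.ceil_le.2 ?_⟩
  have hmin := hi _ (Finset.mem_range.2 ((i + n).mod_lt hm))
  rw [hdefect.map_mod_nat, digitSum_add] at hmin
  push_cast at hmin
  linarith

end PeriodicDigits

section UpperOne

variable {β ρ r t : ℝ}

lemma digitSum_greedy_le_ceilSum (hβ : 1 < β) (hρ : 0 ≤ ρ) (h1 : valSeq β (upperMech ρ) = 1)
    (ht : t ∈ Ico (0 : ℝ) 1) : digitSum (greedy β t) ≤ ceilSum ρ := by
  rw [← digitSum_upperMech hρ]
  refine digitSum_le_of_forall_seqLe (fun a b => ?_) fun m => Or.inr ?_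
  · rw [digitSum_upperMech hρ]
    exact ceilSum_add_ceilSum_le hρ a b
  · refine seqLt_of_valSeq_lt hβ ((bddDigits_greedy hβ ht).shiftn m) (bddDigits_upperMech ρ)
      (fun k => h1 ▸ valSeq_shiftn_upperMech_le hβ hρ _) ?_
    rw [h1, valSeq_shiftn_greedy hβ ht]
    exact (Tbeta_iterate_mem ht m).2

lemma valSeq_lowerMechLeft (hβ : 1 < β) (hρ : 0 < ρ) :
    valSeq β (lowerMechLeft ρ) = valSeq β (upperMech ρ) - 1 / β := by
  have hfirst : upperMech ρ 0 = lowerMechLeft ρ 0 + 1 := by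
    have : 0 < ⌈ρ⌉₊ := Nat.ceil_pos.2 hρ
    simp only [upperMech, lowerMechLeft_zero, diffSeq, ceilSum, zero_add, Nat.cast_one,
      one_mul, Nat.cast_zero, zero_mul, Nat.ceil_zero]
    omega
  have hsub := valSeq_sub_of_first_diff hβ (bddDigits_upperMech ρ) (bddDigits_lowerMechLeft hρ)
    (n := 0) fun i hi => absurd hi i.not_lt_zero
  rw [zero_add, shiftn_lowerMechLeft hρ, hfirst, sub_self, add_zero, pow_one, Nat.cast_succ,
    add_sub_cancel_left] at hsub
  linarith

lemma floorSumLeft_le_digitSum_greedy (hβ : 1 < β) (hρ : 0 < ρ)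
    (h1 : valSeq β (upperMech ρ) = 1) (ht : t ∈ Ebif β) (hle : 1 - 1 / β ≤ t) :
    floorSumLeft ρ ≤ digitSum (greedy β t) := by
  obtain ⟨htI, hmin⟩ := (mem_Ebif_iff hβ).1 ht
  rw [← digitSum_lowerMechLeft hρ.le]
  refine digitSum_le_of_forall_le_seqLe (fun a b => ?_) fun m => ?_
  · have hsub := ceilSum_add_le (ρ := ρ) (a + 1) b
    have hpos := ceilSum_pos hρ a.succ_pos
    rw [digitSum_lowerMechLeft hρ.le]
    simp only [floorSumLeft, ceilSum, Nat.succ_eq_add_one] at hsub hpos ⊢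
    omega
  · refine seqLe_of_valSeq_le hβ (bddDigits_lowerMechLeft hρ)
      ((bddDigits_greedy hβ htI).shiftn m) (fun k => ?_) ?_
    · rw [shiftn_shiftn, valSeq_shiftn_greedy hβ htI]
      exact (Tbeta_iterate_mem htI _).2
    · rw [valSeq_lowerMechLeft hβ hρ, h1, valSeq_shiftn_greedy hβ htI]
      exact hle.trans (hmin m)

lemma lt_one_sub_inv_of_periodic (hβ : 1 < β) (hρ : 0 < ρ) (h1 : valSeq β (upperMech ρ) = 1)
    (ht : t ∈ Ebif β) {m : ℕ} (hm : 0 < m) (hper : (Tbeta β)^[m] t = t) : t < 1 - 1 / β := by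
  by_contra! hle
  have htI := ht.1
  have hshift : shiftn m (greedy β t) = greedy β t := by rw [shiftn_greedy, hper]
  have hbound : ∀ n : ℕ, |(digitSum (greedy β t) n : ℝ) - n * ρ| ≤ 1 := fun n => by
    have hup : (digitSum (greedy β t) n : ℝ) ≤ ⌈n * ρ⌉₊ :=
      mod_cast digitSum_greedy_le_ceilSum hβ hρ.le h1 htI n
    have hlow : (⌈n * ρ⌉₊ : ℝ) ≤ digitSum (greedy β t) n + 1 := mod_cast
      Nat.sub_le_iff_le_add.1 (floorSumLeft_le_digitSum_greedy hβ hρ h1 ht hle n)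
    have := Nat.ceil_lt_add_one (show 0 ≤ n * ρ by positivity)
    have := Nat.le_ceil (n * ρ)
    exact abs_le.2 ⟨by linarith, by linarith⟩
  obtain ⟨i, hi⟩ :=
    exists_ceilSum_le_digitSum_shiftn hm hshift (digitSum_period_eq_mul hshift hbound)
  have horbit := Tbeta_iterate_mem (β := β) htI i
  have hdigits : shiftn i (greedy β t) = upperMech ρ := digitSum_injective <| by
    rw [digitSum_upperMech hρ.le]
    refine le_antisymm ?_ hi
    rw [shiftn_greedy]
    exact digitSum_greedy_le_ceilSum hβ hρ.le h1 horbit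
  have hval := valSeq_shiftn_greedy hβ htI i
  rw [hdigits, h1] at hval
  exact horbit.2.ne' hval

lemma valSeq_splice_greedy_mem_Ebif (hβ : 1 < β) (h1 : valSeq β (upperMech ρ) = 1)
    (hr : 0 ≤ r) (hrρ : r < ρ) (ht : t ∈ Ebif β) {n : ℕ} (hper : (Tbeta β)^[n] t = t)
    (hlt : t < valSeq β (lowerMech r)) :
    valSeq β (splice (greedy β t) n (lowerMech r)) ∈ Ebif β := by
  have : 0 < β := by linarith
  obtain ⟨htI, hmin⟩ := (mem_Ebif_iff hβ).1 ht
  have hρ : 0 ≤ ρ := hr.trans hrρ.le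
  have hu := bddDigits_lowerMech hr
  have hgap : 0 ≤ valSeq β (lowerMech r) - t := sub_nonneg.2 hlt.le
  have hfix := valSeq_splice_greedy hβ htI hu n
  rw [hper] at hfix
  refine valSeq_mem_Ebif hβ ((bddDigits_greedy hβ htI).splice hu n) (fun k => ?_) fun k => ?_ <;>
    rcases le_total k n with hk | hk
  · have horbit := Tbeta_iterate_mem (β := β) htI k
    rw [shiftn_splice_of_le _ _ hk, shiftn_greedy, ← h1]
    refine valSeq_lt_of_digitSum_lt hβ ((bddDigits_greedy hβ horbit).splice hu _)
      (bddDigits_upperMech ρ) ?_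
    rw [digitSum_upperMech hρ]
    exact digitSum_splice_lowerMech_lt hr hrρ (digitSum_greedy_le_ceilSum hβ hρ h1 horbit) _
  · obtain ⟨i, rfl⟩ := Nat.exists_eq_add_of_le hk
    rw [shiftn_add_splice, ← h1]
    exact (valSeq_shiftn_lowerMech_le hβ hr i).trans_lt
      (valSeq_upperMech_strictMonoOn hβ hr hρ hrρ)
  · rw [shiftn_splice_of_le _ _ hk, shiftn_greedy,
      valSeq_splice_greedy hβ (Tbeta_iterate_mem htI k) hu, ← Function.iterate_add_apply,
      Nat.sub_add_cancel hk, hper, hfix]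
    gcongr
    exacts [hmin k, hβ.le, Nat.sub_le n k]
  · obtain ⟨i, rfl⟩ := Nat.exists_eq_add_of_le hk
    rw [shiftn_add_splice, hfix]
    refine le_trans ?_ (le_valSeq_shiftn_lowerMech hβ hr i)
    linarith [div_le_self hgap (one_le_pow₀ (n := n) hβ.le)]

lemma accPt_of_periodic (hβ : 1 < β) (hρ : 0 < ρ) (h1 : valSeq β (upperMech ρ) = 1)
    (ht : t ∈ Ebif β) {m : ℕ} (hm : 0 < m) (hper : (Tbeta β)^[m] t = t) :
    AccPt t (𝓟 (Ebif β)) := by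
  have : 0 < β := by linarith
  have hlt : t < valSeq β (lowerMechLeft ρ) := by
    rw [valSeq_lowerMechLeft hβ hρ, h1]
    exact lt_one_sub_inv_of_periodic hβ hρ h1 ht hm hper
  obtain ⟨r, ⟨hr_lt, hr⟩, hrρ⟩ := (((tendsto_valSeq_lowerMech_nhdsLT hβ hρ).eventually
    (lt_mem_nhds hlt)).and (nhdsWithin_le_nhds (lt_mem_nhds hρ)) |>.and
    self_mem_nhdsWithin).exists
  have hperN : ∀ N : ℕ, (Tbeta β)^[m * N] t = t := fun N => by
    rw [Function.iterate_mul]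
    exact Function.iterate_fixed hper N
  have hval : ∀ N : ℕ, valSeq β (splice (greedy β t) (m * N) (lowerMech r))
      = t + (valSeq β (lowerMech r) - t) / β ^ (m * N) := fun N => by
    rw [valSeq_splice_greedy hβ ht.1 (bddDigits_lowerMech hr.le), hperN]
  have htends : Tendsto (fun N : ℕ => valSeq β (splice (greedy β t) (m * N) (lowerMech r)))
      atTop (𝓝 t) := by
    simp_rw [hval]
    simpa using ((tendsto_div_pow_atTop hβ (valSeq β (lowerMech r) - t)).comp
      (tendsto_id.const_mul_atTop' hm)).const_add t
  refine accPt_iff_frequently.2 (htends.frequently (Frequently.of_forall fun N => ⟨?_, ?_⟩))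
  · have : 0 < (valSeq β (lowerMech r) - t) / β ^ (m * N) :=
      div_pos (sub_pos.2 hr_lt) (by positivity)
    rw [hval]
    linarith
  · exact valSeq_splice_greedy_mem_Ebif hβ h1 hr.le hrρ ht (hperN N) hr_lt

lemma accPt_Ebif_of_upperMech (hβ : 1 < β) (hρ : 0 < ρ) (h1 : valSeq β (upperMech ρ) = 1)
    (ht : t ∈ Ebif β) : AccPt t (𝓟 (Ebif β)) := by
  by_cases h : ∀ m, 0 < m → (Tbeta β)^[m] t ≠ t
  · exact accPt_of_not_periodic hβ ht h
  · push Not at h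
    obtain ⟨m, hm, hper⟩ := h
    exact accPt_of_periodic hβ hρ h1 ht hm hper

end UpperOne

/-! ### Isolated points of the bifurcation set -/

section PeriodicPoint

variable {β t : ℝ} {q : ℕ}

lemma greedy_valSeq {c : ℕ → ℕ} (hβ : 1 < β) (hc : BddDigits c)
    (hlt : ∀ n, valSeq β (shiftn n c) < 1) : greedy β (valSeq β c) = c := by
  funext n
  have horb := Tbeta_iterate_valSeq hβ hc hlt
  have hdigit := cast_greedy hβ ⟨valSeq_nonneg hβ c, hlt 0⟩ n
  rw [horb, horb, mul_valSeq_shiftn hβ hc, add_sub_cancel_right] at hdigit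
  exact_mod_cast hdigit

lemma eventually_greedy_eq_nhds (hβ : 1 < β) (ht : t ∈ Ico (0 : ℝ) 1)
    (hpos : ∀ n, 0 < (Tbeta β)^[n] t) (n : ℕ) : ∀ᶠ x in 𝓝 t, greedy β x n = greedy β t n := by
  filter_upwards [lt_mem_nhds (hpos 0), gt_mem_nhds ht.2,
    eventually_iterate_eq_nhds (fun n => hpos (n + 1)) n,
    eventually_iterate_eq_nhds (fun n => hpos (n + 1)) (n + 1)] with x hx_pos hx_lt hn hsucc
  have hx := cast_greedy hβ ⟨hx_pos.le, hx_lt⟩ n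
  rw [hn, hsucc, pow_succ'] at hx
  exact_mod_cast (show (greedy β x n : ℝ) = greedy β t n by linarith [cast_greedy hβ ht n])

/- Points just to the left of a periodic point fall below themselves after one period. -/
lemma not_accPt_Ebif_of_periodic (hβ : 1 < β) (ht : t ∈ Ebif β) (hpos : 0 < t) (hq : 0 < q)
    (hper : (Tbeta β)^[q] t = t)
    (hright : ∀ x ∈ Ebif β, t < x → ∃ i < q, greedy β x i ≠ greedy β t i) :
    ¬ AccPt t (𝓟 (Ebif β)) := by
  obtain ⟨htI, hmin⟩ := (mem_Ebif_iff hβ).1 ht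
  have horb : ∀ n, 0 < (Tbeta β)^[n] t := fun n => hpos.trans_le (hmin n)
  have hdigits : ∀ᶠ x in 𝓝 t, ∀ i ∈ Finset.range q, greedy β x i = greedy β t i :=
    (eventually_all_finset _).2 fun i _ => eventually_greedy_eq_nhds hβ htI horb i
  intro hacc
  obtain ⟨x, ⟨⟨hne, hx⟩, hxt⟩, hdig⟩ := (((accPt_iff_frequently.1 hacc).and_eventually
    (eventually_iterate_eq_nhds (fun n => horb (n + 1)) q)).and_eventually hdigits).exists
  rcases hne.lt_or_gt with hlt | hgt
  · have hstay := ((mem_Ebif_iff hβ).1 hx).2 q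
    rw [hxt, hper] at hstay
    nlinarith [one_lt_pow₀ hβ hq.ne']
  · obtain ⟨i, hi, hdiff⟩ := hright x hx hgt
    exact hdiff (hdig i (Finset.mem_range.2 hi))

end PeriodicPoint

section RationalSlope

variable {β : ℝ} {p q : ℕ}

lemma floorSum_div (p q n : ℕ) : floorSum ((p : ℝ) / q) n = n * p / q := by
  rw [floorSum, ← mul_div_assoc, ← Nat.cast_mul, Nat.floor_div_eq_div]

lemma shiftn_lowerMech_div (hq : 0 < q) :
    shiftn q (lowerMech ((p : ℝ) / q)) = lowerMech ((p : ℝ) / q) := by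
  funext i
  simp only [shiftn, lowerMech, diffSeq, floorSum_div]
  rw [add_right_comm, add_mul (i + 1) q, add_mul i q, Nat.add_mul_div_left _ _ hq,
    Nat.add_mul_div_left _ _ hq, Nat.add_sub_add_right]

lemma valSeq_lowerMech_pos {ρ : ℝ} (hβ : 1 < β) (hρ : 0 < ρ) : 0 < valSeq β (lowerMech ρ) := by
  refine (valSeq_nonneg hβ (lowerMech 0)).trans_lt <| valSeq_lt_of_digitSum_lt hβ
    (bddDigits_lowerMech le_rfl) (bddDigits_lowerMech hρ.le) ?_
  rw [digitSum_lowerMech le_rfl, digitSum_lowerMech hρ.le]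
  exact floorSum_lt_floorSum le_rfl hρ

lemma exists_mul_mod_eq_pred (hpq : p.Coprime q) (hq : 0 < q) {k : ℕ} (hk : q ≤ k) :
    ∃ i ≤ k, k < i + q ∧ i * p % q = q - 1 := by
  obtain ⟨m, hmq, hm⟩ := Nat.exists_mul_mod_eq_of_coprime (q - 1) hpq hq.ne'
  refine ⟨m + q * ((k - m) / q), ?_, ?_, ?_⟩
  · have := Nat.mul_div_le (k - m) q
    omega
  · have := Nat.lt_mul_div_succ (k - m) hq
    rw [mul_add, mul_one] at this
    omega
  · rw [add_mul, mul_assoc, Nat.add_mul_mod_self_left, mul_comm, hm,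
      Nat.mod_eq_of_lt (Nat.sub_lt hq one_pos)]

/- The residue `q - 1` makes the addition of any nonzero residue carry, which turns the floor of
`n p / q` into the next integer. -/
lemma floorSum_div_add_of_mod_eq_pred (hpq : p.Coprime q) {i n : ℕ} (hn : n < q)
    (hi : i * p % q = q - 1) :
    floorSum ((p : ℝ) / q) (i + n)
      = floorSum ((p : ℝ) / q) i + ceilSumRight ((p : ℝ) / q) n := by
  have hq : 0 < q := by omega
  rcases n.eq_zero_or_pos with rfl | hpos
  · simp [ceilSumRight]
  have hmod : n * p % q ≠ 0 := fun h =>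
    (Nat.le_of_dvd hpos (hpq.symm.dvd_of_dvd_mul_right (Nat.dvd_of_mod_eq_zero h))).not_gt hn
  rw [ceilSumRight, if_neg hpos.ne']
  change _ = _ + (floorSum _ n + 1)
  rw [floorSum_div, floorSum_div, floorSum_div, add_mul, Nat.add_div hq, if_pos (by omega),
    add_assoc]

lemma lowerMech_div_add_of_mod_eq_pred (hpq : p.Coprime q) {i n : ℕ} (hn : n + 1 < q)
    (hi : i * p % q = q - 1) :
    lowerMech ((p : ℝ) / q) (i + n) = upperMechRight ((p : ℝ) / q) n := by
  have h := floorSum_div_add_of_mod_eq_pred hpq (n := n) (by omega) hi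
  have hsucc := floorSum_div_add_of_mod_eq_pred hpq hn hi
  simp only [lowerMech, upperMechRight, diffSeq, add_assoc, h, hsucc, Nat.add_sub_add_left]

lemma lowerMech_div_add_pred_of_mod_eq_pred (hpq : p.Coprime q) {i n : ℕ} (hn : n + 1 = q)
    (hi : i * p % q = q - 1) :
    lowerMech ((p : ℝ) / q) (i + n) + 1 = upperMechRight ((p : ℝ) / q) n := by
  have hq : 0 < q := by omega
  have h := floorSum_div_add_of_mod_eq_pred hpq (n := n) (by omega) hi
  have hle : ceilSumRight ((p : ℝ) / q) n ≤ p := by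
    have hmono := floorSum_monotone (ρ := (p : ℝ) / q) (by positivity) (show i + n ≤ i + q by omega)
    rw [h, floorSum_div, floorSum_div, add_mul, Nat.add_mul_div_left _ _ hq] at hmono
    omega
  have hsum : ceilSumRight ((p : ℝ) / q) q = p + 1 := by
    rw [ceilSumRight, if_neg hq.ne']
    change floorSum _ q + 1 = _
    rw [floorSum_div, Nat.mul_div_cancel_left _ hq]
  simp only [lowerMech, upperMechRight, diffSeq]
  rw [add_assoc i, hn, hsum, h, floorSum_div, floorSum_div, add_mul, Nat.add_mul_div_left _ _ hq]
  omega

lemma exists_one_lt_valSeq_shiftn (hβ : 1 < β) (hpq : p.Coprime q) (hq : 0 < q)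
    (hlt : valSeq β (upperMech ((p : ℝ) / q)) < 1)
    (hle : 1 ≤ valSeq β (upperMechRight ((p : ℝ) / q))) {d : ℕ → ℕ} (hd : BddDigits d)
    (hmin : ∀ n, valSeq β (lowerMech ((p : ℝ) / q)) < valSeq β (shiftn n d)) {k : ℕ} (hk : q ≤ k)
    (hagree : ∀ j < k, lowerMech ((p : ℝ) / q) j = d j)
    (hdiff : lowerMech ((p : ℝ) / q) k < d k) :
    ∃ i, 1 < valSeq β (shiftn i d) := by
  have : 0 < β := by linarith
  obtain ⟨i, hik, hki, hi⟩ := exists_mul_mod_eq_pred hpq hq hk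
  obtain ⟨n, rfl⟩ := Nat.exists_eq_add_of_le hik
  refine ⟨i, hle.trans_lt (sub_pos.1 ?_)⟩
  have hρ : 0 ≤ (p : ℝ) / q := by positivity
  generalize hr : (p : ℝ) / q = ρ at *
  have hprefix : ∀ j < n, shiftn i d j = upperMechRight ρ j := fun j hj => by
    subst hr
    rw [← lowerMech_div_add_of_mod_eq_pred hpq (by omega) hi, hagree _ (by omega), shiftn, add_comm]
  rw [valSeq_sub_of_first_diff hβ (hd.shiftn i) (bddDigits_upperMechRight hρ) hprefix,
    shiftn_shiftn, shiftn_upperMechRight, show shiftn i d n = d (i + n) by rw [shiftn, add_comm]]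
  refine div_pos ?_ (by positivity)
  have hdi := hmin (n + 1 + i)
  by_cases hlast : upperMechRight ρ n + 1 ≤ d (i + n)
  · have hcast : (upperMechRight ρ n : ℝ) + 1 ≤ d (i + n) := mod_cast hlast
    linarith [valSeq_shiftn_lowerMech_le hβ hρ (n + 1), valSeq_nonneg hβ (lowerMech ρ)]
  · subst hr
    have hnq : n + 1 = q := by
      by_contra hne
      have := lowerMech_div_add_of_mod_eq_pred hpq (n := n) (by omega) hi
      omega
    have hcast : (upperMechRight ((p : ℝ) / q) n : ℝ) ≤ d (i + n) := by
      have := lowerMech_div_add_pred_of_mod_eq_pred hpq hnq hi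
      exact_mod_cast (by omega)
    rw [hnq, shiftn_lowerMech_div hq]
    rw [hnq] at hdi
    linarith

lemma exists_isolated_Ebif (hβ : 1 < β) (hp : 0 < p) (hq : 0 < q) (hpq : p.Coprime q)
    (hlt : valSeq β (upperMech ((p : ℝ) / q)) < 1)
    (hle : 1 ≤ valSeq β (upperMechRight ((p : ℝ) / q))) :
    ∃ t ∈ Ebif β, ¬ AccPt t (𝓟 (Ebif β)) := by
  set z := lowerMech ((p : ℝ) / q) with hz
  have hρ : 0 < (p : ℝ) / q := by positivity
  have hz_bdd : BddDigits z := bddDigits_lowerMech hρ.le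
  have hz_lt : ∀ n, valSeq β (shiftn n z) < 1 := fun n =>
    (valSeq_shiftn_lowerMech_le hβ hρ.le n).trans_lt hlt
  have ht : valSeq β z ∈ Ebif β :=
    valSeq_mem_Ebif hβ hz_bdd hz_lt (le_valSeq_shiftn_lowerMech hβ hρ.le)
  refine ⟨_, ht, not_accPt_Ebif_of_periodic hβ ht (valSeq_lowerMech_pos hβ hρ) hq ?_ ?_⟩
  · rw [Tbeta_iterate_valSeq hβ hz_bdd hz_lt, hz, shiftn_lowerMech_div hq]
  intro x hx hzx
  obtain ⟨hxI, hxmin⟩ := (mem_Ebif_iff hβ).1 hx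
  have hd_bdd := bddDigits_greedy hβ hxI
  have hd_val := valSeq_shiftn_greedy hβ hxI
  by_contra! hagree_q
  rw [greedy_valSeq hβ hz_bdd hz_lt] at hagree_q
  obtain ⟨k, hagree, hdiff⟩ : seqLt z (greedy β x) := seqLt_of_valSeq_lt hβ hz_bdd hd_bdd
    (fun n => (hd_val _ ▸ (Tbeta_iterate_mem hxI _).2).le) ((valSeq_greedy hβ hxI).symm ▸ hzx)
  have hqk : q ≤ k := not_lt.1 fun hkq => hdiff.ne' (hagree_q k hkq)
  obtain ⟨i, hi⟩ := exists_one_lt_valSeq_shiftn hβ hpq hq hlt hle hd_bdd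
    (fun n => hd_val n ▸ hzx.trans_le (hxmin n)) hqk hagree hdiff
  exact (hd_val i ▸ hi).not_gt (Tbeta_iterate_mem hxI i).2

end RationalSlope

/-! ### Dependence on the base -/

section Bases

variable {β ρ : ℝ} {c : ℕ → ℕ}

lemma hasSum_div_pow_succ (hβ : 1 < β) (C : ℝ) :
    HasSum (fun n : ℕ => C / β ^ (n + 1)) (C / (β - 1)) := by
  have : 0 < β := by linarith
  have : β - 1 ≠ 0 := by linarith
  have hterm (n : ℕ) : C / β ^ (n + 1) = C / β * β⁻¹ ^ n := by
    rw [pow_succ, inv_pow]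
    field_simp
  rw [show C / (β - 1) = C / β * (1 - β⁻¹)⁻¹ by field_simp]
  simp_rw [hterm]
  exact (hasSum_geometric_of_lt_one (by positivity) (inv_lt_one_of_one_lt₀ hβ)).mul_left _

lemma hasSum_natCast_mul_div_pow_succ (hβ : 1 < β) (ρ : ℝ) :
    HasSum (fun n : ℕ => n * ρ / β ^ (n + 1)) (ρ / (β - 1) ^ 2) := by
  have : 0 < β := by linarith
  have : β - 1 ≠ 0 := by linarith
  have hnorm : ‖β⁻¹‖ < 1 := by
    rw [Real.norm_of_nonneg (by positivity)]
    exact inv_lt_one_of_one_lt₀ hβ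
  have hterm (n : ℕ) : n * ρ / β ^ (n + 1) = ρ / β * (n * β⁻¹ ^ n) := by
    rw [pow_succ, inv_pow]
    field_simp
  rw [show ρ / (β - 1) ^ 2 = ρ / β * (β⁻¹ / (1 - β⁻¹) ^ 2) by field_simp]
  simp_rw [hterm]
  exact (hasSum_coe_mul_geometric_of_norm_lt_one hnorm).mul_left _

lemma valSeq_le_div (hβ : 1 < β) {D : ℕ} (hD : ∀ i, c i ≤ D) : valSeq β c ≤ D / (β - 1) := by
  have : 0 < β := by linarith
  have hsum := hasSum_div_pow_succ hβ D
  rw [← hsum.tsum_eq]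
  refine (summable_digits hβ ⟨D, hD⟩).tsum_le_tsum (fun i => ?_) hsum.summable
  have : (c i : ℝ) ≤ D := mod_cast hD i
  gcongr

lemma div_le_valSeq (hβ : 1 < β) (hc : BddDigits c) (h : ∀ n : ℕ, n * ρ ≤ digitSum c n) :
    ρ / (β - 1) ≤ valSeq β c := by
  have : 0 < β := by linarith
  have : β - 1 ≠ 0 := by linarith
  have hsum := hasSum_natCast_mul_div_pow_succ hβ ρ
  calc ρ / (β - 1) = (β - 1) * (ρ / (β - 1) ^ 2) := by field_simp
    _ ≤ valSeq β c := by
      rw [valSeq_eq_tsum_digitSum hβ hc, ← hsum.tsum_eq]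
      refine mul_le_mul_of_nonneg_left ?_ (by linarith)
      refine hsum.summable.tsum_le_tsum (fun n => ?_) (summable_digitSum hβ hc)
      have := h n
      gcongr

lemma continuousOn_valSeq {a : ℝ} (ha : 1 < a) (hc : BddDigits c) :
    ContinuousOn (fun β => valSeq β c) (Ici a) := by
  have : 0 < a := by linarith
  refine continuousOn_tsum (fun i => ?_) (summable_digits ha hc) fun i β (hβ : a ≤ β) => ?_
  · refine continuousOn_const.div (by fun_prop) fun β (hβ : a ≤ β) => ?_
    have : 0 < β := by linarith
    positivity
  · have : 0 < β := by linarith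
    rw [Real.norm_of_nonneg (by positivity)]
    gcongr

lemma le_valSeq_sub {β' : ℝ} (hβ : 1 < β) (h : β ≤ β') (hc : BddDigits c) (k : ℕ) :
    c k / β ^ (k + 1) - c k / β' ^ (k + 1) ≤ valSeq β c - valSeq β' c := by
  have : 0 < β := by linarith
  have hsum := summable_digits hβ hc
  have hsum' := summable_digits (hβ.trans_le h) hc
  rw [valSeq, valSeq, ← hsum.tsum_sub hsum']
  refine (hsum.sub hsum').le_tsum k fun i _ => sub_nonneg.2 ?_
  gcongr

lemma valSeq_strictAntiOn (hc : BddDigits c) (hpos : 0 < c 0) :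
    StrictAntiOn (fun β => valSeq β c) (Ioi 1) := fun β (hβ : 1 < β) β' _ h => by
  have : 0 < β := by linarith
  have : (0 : ℝ) < c 0 := mod_cast hpos
  refine sub_pos.1 ((sub_pos.2 ?_).trans_le (le_valSeq_sub hβ h.le hc 0))
  gcongr

lemma exists_base_valSeq_eq_one (hρ : 0 < ρ) (hc : BddDigits c)
    (h : ∀ n : ℕ, n * ρ ≤ digitSum c n) : ∃ β, 1 < β ∧ valSeq β c = 1 := by
  obtain ⟨D, hD⟩ := id hc
  have : (0 : ℝ) ≤ D := D.cast_nonneg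
  have hlow : 1 ≤ valSeq (1 + ρ) c := by
    have := div_le_valSeq (β := 1 + ρ) (by linarith) hc h
    rwa [add_sub_cancel_left, div_self hρ.ne'] at this
  have hhigh : valSeq (1 + ρ + D) c ≤ 1 :=
    (valSeq_le_div (by linarith) hD).trans ((div_le_one (by linarith)).2 (by linarith))
  obtain ⟨β, hβ, hval⟩ := intermediate_value_Icc' (show 1 + ρ ≤ 1 + ρ + D by linarith)
    ((continuousOn_valSeq (by linarith) hc).mono Icc_subset_Ici_self) ⟨hhigh, hlow⟩
  exact ⟨β, by linarith [hβ.1], hval⟩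

end Bases

/-! ### The slope attached to a base -/

section Slope

variable {β r ρ : ℝ}

lemma upperMech_zero_pos (hρ : 0 < ρ) : 0 < upperMech ρ 0 := by
  simpa [upperMech, diffSeq, ceilSum] using hρ

lemma ceilSum_le_ceilSumRight (ρ : ℝ) (n : ℕ) : ceilSum ρ n ≤ ceilSumRight ρ n := by
  unfold ceilSum ceilSumRight
  split_ifs with h
  · simp [h]
  · exact Nat.ceil_le_floor_add_one _

lemma mul_le_digitSum_upperMech (hρ : 0 ≤ ρ) (n : ℕ) : n * ρ ≤ digitSum (upperMech ρ) n := by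
  rw [digitSum_upperMech hρ]
  exact Nat.le_ceil _

lemma mul_le_digitSum_upperMechRight (hρ : 0 ≤ ρ) (n : ℕ) :
    n * ρ ≤ digitSum (upperMechRight ρ) n := by
  rw [digitSum_upperMechRight hρ]
  exact (Nat.le_ceil _).trans (mod_cast ceilSum_le_ceilSumRight ρ n)

lemma exists_base_upperMech (hρ : 0 < ρ) : ∃ β, 1 < β ∧ valSeq β (upperMech ρ) = 1 :=
  exists_base_valSeq_eq_one hρ (bddDigits_upperMech ρ) (mul_le_digitSum_upperMech hρ.le)

lemma exists_base_upperMechRight (hρ : 0 < ρ) : ∃ β, 1 < β ∧ valSeq β (upperMechRight ρ) = 1 :=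
  exists_base_valSeq_eq_one hρ (bddDigits_upperMechRight hρ.le)
    (mul_le_digitSum_upperMechRight hρ.le)

lemma valSeq_upperMechRight_lt (hβ : 1 < β) (hr : 0 ≤ r) (h : r < ρ) :
    valSeq β (upperMechRight r) < valSeq β (upperMech ρ) := by
  obtain ⟨s, hrs, hsρ⟩ := exists_between h
  have hmono := valSeq_upperMech_strictMonoOn hβ
  refine (le_of_tendsto (tendsto_valSeq_upperMech_nhdsGT hβ hr) ?_).trans_lt
    (hmono (hr.trans hrs.le) (hr.trans h.le) hsρ)
  filter_upwards [Ioc_mem_nhdsGT hrs] with u hu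
  exact hmono.monotoneOn (hr.trans hu.1.le) (hr.trans hrs.le) hu.2

lemma upperMech_eq_upperMechRight (hρ : 0 ≤ ρ) (hirr : Irrational ρ) :
    upperMech ρ = upperMechRight ρ := by
  refine congrArg diffSeq (funext fun n => (ceilSum_le_ceilSumRight ρ n).antisymm ?_)
  unfold ceilSum ceilSumRight
  split_ifs with hn
  · exact Nat.zero_le _
  · refine Nat.lt_ceil.2 ((Nat.floor_le (by positivity)).lt_of_ne fun h => ?_)
    exact (hirr.natCast_mul hn).ne_nat _ h.symm

lemma valSeq_upperMechRight_zero_lt_one (hβ : 1 < β) : valSeq β (upperMechRight 0) < 1 := by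
  have hzero : ∀ i, i ≠ 0 → upperMechRight 0 i = 0 := fun i hi => by
    obtain ⟨n, rfl⟩ := Nat.exists_eq_succ_of_ne_zero hi
    simp [upperMechRight_succ, lowerMech, diffSeq, floorSum]
  rw [valSeq, tsum_eq_single 0 fun i hi => by simp [hzero i hi]]
  simpa [upperMechRight_zero] using inv_lt_one_of_one_lt₀ hβ

lemma exists_slope (hβ : 1 < β) :
    ∃ ρ, 0 < ρ ∧ valSeq β (upperMech ρ) ≤ 1 ∧ 1 ≤ valSeq β (upperMechRight ρ) := by
  set S : Set ℝ := {ρ | 0 < ρ ∧ valSeq β (upperMech ρ) ≤ 1}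
  obtain ⟨r₀, hr₀⟩ : S.Nonempty := by
    obtain ⟨r, hr, hr_pos⟩ := (((tendsto_valSeq_upperMech_nhdsGT hβ le_rfl).eventually
      (gt_mem_nhds (valSeq_upperMechRight_zero_lt_one hβ))).and self_mem_nhdsWithin).exists
    exact ⟨r, hr_pos, hr.le⟩
  have hbdd : BddAbove S := by
    refine ⟨β - 1, fun ρ hρ => (div_le_one (by linarith)).1 ?_⟩
    exact (div_le_valSeq hβ (bddDigits_upperMech ρ) (mul_le_digitSum_upperMech hρ.1.le)).trans hρ.2
  have hpos : 0 < sSup S := hr₀.1.trans_le (le_csSup hbdd hr₀)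
  refine ⟨sSup S, hpos, ?_, ?_⟩
  · refine le_of_tendsto (tendsto_valSeq_upperMech_nhdsLT hβ _) ?_
    filter_upwards [Ioo_mem_nhdsLT hpos] with r hr
    obtain ⟨s, hs, hrs⟩ := exists_lt_of_lt_csSup ⟨r₀, hr₀⟩ hr.2
    exact (valSeq_upperMech_strictMonoOn hβ hr.1.le hs.1.le hrs).le.trans hs.2
  · refine ge_of_tendsto (tendsto_valSeq_upperMech_nhdsGT hβ hpos.le) ?_
    filter_upwards [self_mem_nhdsWithin] with r (hr : sSup S < r)
    by_contra! hlt
    exact (le_csSup hbdd ⟨hpos.trans hr, hlt.le⟩).not_gt hr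

lemma exists_coprime_div_of_not_irrational (hρ : 0 < ρ) (h : ¬ Irrational ρ) :
    ∃ p q : ℕ, 0 < p ∧ 0 < q ∧ p.Coprime q ∧ ρ = (p : ℝ) / q := by
  obtain ⟨r, rfl⟩ := not_not.1 h
  lift r to ℚ≥0 using (Rat.cast_pos.1 hρ).le
  exact ⟨r.num, r.den, NNRat.num_pos.2 (mod_cast hρ), r.den_pos, r.coprime_num_den,
    by rw [← NNRat.cast_def, Rat.cast_nnratCast]⟩

lemma exists_valSeq_upperMech_eq_one_or_lt (hβ : 1 < β) :
    (∃ ρ, 0 < ρ ∧ valSeq β (upperMech ρ) = 1) ∨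
      ∃ p q : ℕ, 0 < p ∧ 0 < q ∧ p.Coprime q ∧ valSeq β (upperMech ((p : ℝ) / q)) < 1 ∧
        1 ≤ valSeq β (upperMechRight ((p : ℝ) / q)) := by
  obtain ⟨ρ, hρ, hupper, hright⟩ := exists_slope hβ
  rcases hupper.lt_or_eq with hlt | heq
  · have hrat : ¬ Irrational ρ := fun hirr =>
      (upperMech_eq_upperMechRight hρ.le hirr ▸ hright).not_gt hlt
    obtain ⟨p, q, hp, hq, hpq, rfl⟩ := exists_coprime_div_of_not_irrational hρ hrat
    exact Or.inr ⟨p, q, hp, hq, hpq, hlt, hright⟩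
  · exact Or.inl ⟨ρ, hρ, heq⟩

end Slope

/-! ### Farey words are Christoffel words -/

section Christoffel

variable {p q p' q' : ℕ} {w v : List ℕ}

/-- The lower Christoffel word of slope `p / q`: one period of the lower mechanical sequence,
written with truncated division of naturals. -/
def christoffel (p q : ℕ) : List ℕ := (List.range q).map fun i => (i + 1) * p / q - i * p / q

lemma christoffel_eq_map (p q : ℕ) :
    christoffel p q = (List.range q).map (lowerMech ((p : ℝ) / q)) := by
  refine congrArg (List.map · _) (funext fun i => ?_)
  rw [lowerMech, diffSeq, floorSum_div, floorSum_div]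

lemma length_christoffel (p q : ℕ) : (christoffel p q).length = q := by simp [christoffel]

lemma mediant_div_left (hq : 0 < q) (hq' : 0 < q') (h : p' * q = p * q' + 1) {i : ℕ}
    (hi : i ≤ q) : i * (p + p') / (q + q') = i * p / q := by
  have hlow : q * (i * p / q) ≤ i * p := Nat.mul_div_le _ _
  have hhigh : i * p + 1 ≤ q * (i * p / q + 1) := Nat.lt_mul_div_succ _ hq
  have hscaled : q * (i * (p + p')) = i * p * (q + q') + i := by
    linear_combination i * h
  refine Nat.div_eq_of_lt_le ?_ ?_
  · refine Nat.le_of_mul_le_mul_left ?_ hq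
    nlinarith
  · refine Nat.lt_of_mul_lt_mul_left (a := q) ?_
    nlinarith

lemma mediant_div_right (hq : 0 < q) (hq' : 0 < q') (h : p' * q = p * q' + 1) {j : ℕ}
    (hj : j ≤ q') : (q + j) * (p + p') / (q + q') = p + j * p' / q' := by
  have hlow : q' * (j * p' / q') ≤ j * p' := Nat.mul_div_le _ _
  have hhigh : j * p' + 1 ≤ q' * (j * p' / q' + 1) := Nat.lt_mul_div_succ _ hq'
  have hscaled : q' * ((q + j) * (p + p')) + j = (q' * p + j * p') * (q + q') + q' := by
    zify at h ⊢
    linear_combination (q' - j : ℤ) * h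
  refine Nat.div_eq_of_lt_le ?_ ?_
  · refine Nat.le_of_mul_le_mul_left ?_ hq'
    nlinarith
  · refine Nat.lt_of_mul_lt_mul_left (a := q') ?_
    nlinarith

lemma christoffel_append (hq : 0 < q) (hq' : 0 < q') (h : p' * q = p * q' + 1) :
    christoffel p q ++ christoffel p' q' = christoffel (p + p') (q + q') := by
  unfold christoffel
  rw [List.range_add, List.map_append, List.map_map]
  congr 1
  · refine List.map_congr_left fun i hi => ?_
    have hi := List.mem_range.1 hi
    rw [mediant_div_left hq hq' h hi, mediant_div_left hq hq' h hi.le]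
  · refine List.map_congr_left fun j hj => ?_
    have hj := List.mem_range.1 hj
    rw [Function.comp_apply, add_assoc q j 1, mediant_div_right hq hq' h hj,
      mediant_div_right hq hq' h hj.le, Nat.add_sub_add_left]

lemma theta_christoffel (hq : 0 < q) : theta (christoffel p q) = christoffel (p + q) q := by
  unfold theta christoffel
  rw [List.map_map]
  refine List.map_congr_left fun i _ => ?_
  have hdiv (j : ℕ) : j * (p + q) / q = j * p / q + j := by
    rw [mul_add, Nat.add_mul_div_right _ _ hq]
  have : i * p / q ≤ (i + 1) * p / q := by gcongr; omega
  rw [Function.comp_apply, hdiv, hdiv]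
  omega

lemma theta_iterate_christoffel (hq : 0 < q) (k : ℕ) :
    theta^[k] (christoffel p q) = christoffel (p + k * q) q := by
  induction k with
  | zero => simp
  | succ k ih =>
    rw [Function.iterate_succ_apply', ih, theta_christoffel hq]
    congr 1
    ring

/-- Christoffel words, given by a nonnegative slope in lowest terms. -/
def IsChristoffel (w : List ℕ) : Prop := ∃ p q, 0 < q ∧ p.Coprime q ∧ w = christoffel p q

/-- Christoffel words `w`, `v` whose slopes `p / q < p' / q'` are Farey neighbours. -/
def FareyAdj (w v : List ℕ) : Prop := ∃ p q p' q', 0 < q ∧ 0 < q' ∧ p' * q = p * q' + 1 ∧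
  w = christoffel p q ∧ v = christoffel p' q'

lemma coprime_mediant (h : p' * q = p * q' + 1) : (p + p').Coprime (q + q') := by
  refine Nat.dvd_one.1 ?_
  have hdet : (p + p') * q = p * (q + q') + 1 := by linear_combination h
  refine (Nat.dvd_add_right ((Nat.gcd_dvd_right (p + p') (q + q')).mul_left p)).1 ?_
  rw [← hdet]
  exact (Nat.gcd_dvd_left _ _).mul_right q

lemma FareyAdj.append_right (h : FareyAdj w v) : FareyAdj w (w ++ v) := by
  obtain ⟨p, q, p', q', hq, hq', h, rfl, rfl⟩ := h
  exact ⟨p, q, _, _, hq, by omega, by linear_combination h, rfl, christoffel_append hq hq' h⟩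

lemma FareyAdj.append_left (h : FareyAdj w v) : FareyAdj (w ++ v) v := by
  obtain ⟨p, q, p', q', hq, hq', h, rfl, rfl⟩ := h
  exact ⟨_, _, p', q', by omega, hq', by linear_combination h, christoffel_append hq hq' h, rfl⟩

lemma FareyAdj.isChristoffel_append (h : FareyAdj w v) : IsChristoffel (w ++ v) := by
  obtain ⟨p, q, p', q', hq, hq', h, rfl, rfl⟩ := h
  exact ⟨_, _, by omega, coprime_mediant h, christoffel_append hq hq' h⟩

end Christoffel

section FareyInsert

variable {w v : List ℕ} {l : List (List ℕ)}

lemma exists_fareyInsert_cons (w : List ℕ) (l : List (List ℕ)) :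
    ∃ t, fareyInsert (w :: l) = w :: t := by
  cases l with
  | nil => exact ⟨[], rfl⟩
  | cons v l => exact ⟨_, rfl⟩

lemma isChain_fareyInsert (h : l.IsChain FareyAdj) : (fareyInsert l).IsChain FareyAdj := by
  induction l using fareyInsert.induct with
  | case1 => exact h
  | case2 w => exact h
  | case3 w v rest ih =>
    obtain ⟨hwv, hrest⟩ := List.isChain_cons_cons.1 h
    obtain ⟨t, ht⟩ := exists_fareyInsert_cons v rest
    rw [fareyInsert, ht, List.isChain_cons_cons, List.isChain_cons_cons, ← ht]
    exact ⟨hwv.append_right, hwv.append_left, ih hrest⟩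

lemma isChristoffel_of_mem_fareyInsert (h : l.IsChain FareyAdj)
    (hl : ∀ w ∈ l, IsChristoffel w) : ∀ w ∈ fareyInsert l, IsChristoffel w := by
  induction l using fareyInsert.induct with
  | case1 => exact hl
  | case2 w => exact hl
  | case3 w v rest ih =>
    obtain ⟨hwv, hrest⟩ := List.isChain_cons_cons.1 h
    rw [List.forall_mem_cons] at hl
    rw [fareyInsert, List.forall_mem_cons, List.forall_mem_cons]
    exact ⟨hl.1, hwv.isChristoffel_append, ih hrest hl.2⟩

lemma isChain_fareyLevel (n : ℕ) : (fareyLevel n).IsChain FareyAdj := by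
  induction n with
  | zero => exact List.isChain_pair.2 ⟨0, 1, 1, 1, by simp [christoffel]⟩
  | succ n ih => exact isChain_fareyInsert ih

lemma isChristoffel_of_mem_fareyLevel (n : ℕ) : ∀ w ∈ fareyLevel n, IsChristoffel w := by
  induction n with
  | zero =>
    rw [fareyLevel, List.forall_mem_cons, List.forall_mem_singleton]
    exact ⟨⟨0, 1, by simp [christoffel]⟩, ⟨1, 1, by simp [christoffel]⟩⟩
  | succ n ih => exact isChristoffel_of_mem_fareyInsert (isChain_fareyLevel n) ih

lemma infix_fareyInsert (h : [w, v] <:+: l) : [w, w ++ v, v] <:+: fareyInsert l := by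
  induction l using fareyInsert.induct with
  | case1 => simp at h
  | case2 x => simpa using h.length_le
  | case3 x y rest ih =>
    rw [fareyInsert]
    rcases List.infix_cons_iff.1 h with hpre | hinf
    · obtain ⟨rfl, hv⟩ := List.cons_prefix_cons.1 hpre
      obtain ⟨rfl, -⟩ := List.cons_prefix_cons.1 hv
      obtain ⟨t, ht⟩ := exists_fareyInsert_cons v rest
      exact ⟨[], t, by rw [ht]; rfl⟩
    · exact List.infix_cons (List.infix_cons (ih hinf))

end FareyInsert

section FareyExt

variable {p q : ℕ}

/- Descent in the Stern–Brocot tree: each insertion replaces the interval `(a / b, c / d)` around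
`p / q` by one with a larger `b + d`, and `b + d ≤ q` as long as `p / q` lies strictly inside. -/
lemma exists_mem_fareyLevel_of_between (hpq : p.Coprime q) {n a b c d : ℕ} (hb : 0 < b)
    (hd : 0 < d) (hdet : c * b = a * d + 1) (hleft : a * q < p * b) (hright : p * d < c * q)
    (hinf : [christoffel a b, christoffel c d] <:+: fareyLevel n) :
    ∃ m, christoffel p q ∈ fareyLevel m := by
  have hbound : b + d ≤ q := by
    have : q * (c * b) = q * (a * d + 1) := by rw [hdet]
    nlinarith
  have hstep : [christoffel a b, christoffel (a + c) (b + d), christoffel c d] <:+: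
      fareyLevel (n + 1) := by
    rw [← christoffel_append hb hd hdet]
    exact infix_fareyInsert hinf
  rcases lt_trichotomy (p * (b + d)) ((a + c) * q) with hlt | heq | hgt
  · exact exists_mem_fareyLevel_of_between hpq (d := b + d) hb (by omega)
      (by linear_combination hdet) hleft hlt ((List.prefix_append [_, _] [_]).isInfix.trans hstep)
  · have hco := coprime_mediant hdet
    obtain rfl : p = a + c := Nat.dvd_antisymm (hpq.dvd_of_dvd_mul_right ⟨b + d, heq.symm⟩)
      (hco.dvd_of_dvd_mul_right ⟨q, heq⟩)
    obtain rfl : b + d = q := Nat.eq_of_mul_eq_mul_left (by nlinarith) heq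
    exact ⟨n + 1, hstep.subset (by simp)⟩
  · exact exists_mem_fareyLevel_of_between hpq (b := b + d) (by omega) hd
      (by linear_combination hdet) hgt hright ((List.suffix_cons _ [_, _]).isInfix.trans hstep)
termination_by q + 1 - (b + d)

lemma exists_christoffel_mem_fareyLevel (hpq : p.Coprime q) (hp : 0 < p) (hlt : p < q) :
    ∃ m, christoffel p q ∈ fareyLevel m :=
  exists_mem_fareyLevel_of_between hpq (n := 0) (a := 0) (b := 1) (c := 1) (d := 1) one_pos
    one_pos rfl (by omega) (by omega) (by simp [fareyLevel, christoffel])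

lemma exists_eq_christoffel_of_mem_FareyHat {w : List ℕ} (hw : w ∈ FareyHat) :
    ∃ p q, 0 < p ∧ 0 < q ∧ p.Coprime q ∧ w = christoffel p q := by
  rcases hw with ⟨⟨n, hn⟩, hzero, -⟩ | rfl
  · obtain ⟨p, q, hq, hpq, rfl⟩ := isChristoffel_of_mem_fareyLevel n w hn
    refine ⟨p, q, Nat.pos_of_ne_zero ?_, hq, hpq, rfl⟩
    rintro rfl
    obtain rfl : q = 1 := by simpa using hpq
    exact hzero (by simp [christoffel])
  · exact ⟨1, 1, by simp [christoffel]⟩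

lemma christoffel_mem_FareyHat (hp : 0 < p) (hle : p ≤ q) (hpq : p.Coprime q) :
    christoffel p q ∈ FareyHat := by
  rcases hle.lt_or_eq with hlt | rfl
  · have hlen (a : ℕ) : christoffel p q ≠ [a] := fun h => by
      have := congrArg List.length h
      rw [length_christoffel, List.length_singleton] at this
      omega
    exact Or.inl ⟨exists_christoffel_mem_fareyLevel hpq hp hlt, hlen 0, hlen 1⟩
  · obtain rfl : p = 1 := by simpa using hpq
    exact Or.inr (by simp [christoffel])

lemma mem_FareyExt_iff {s : List ℕ} :
    s ∈ FareyExt ↔ ∃ p q, 0 < p ∧ 0 < q ∧ p.Coprime q ∧ s = christoffel p q := by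
  constructor
  · rintro ⟨v, hv, k, rfl⟩
    obtain ⟨p, q, hp, hq, hpq, rfl⟩ := exists_eq_christoffel_of_mem_FareyHat hv
    exact ⟨p + k * q, q, by omega, hq, by simpa using hpq, theta_iterate_christoffel hq k⟩
  · rintro ⟨p, q, hp, hq, hpq, rfl⟩
    obtain ⟨k, r, hr, hrq, rfl⟩ : ∃ k r, 0 < r ∧ r ≤ q ∧ p = r + k * q := by
      refine ⟨(p - 1) / q, (p - 1) % q + 1, by omega, Nat.mod_lt _ hq, ?_⟩
      have := Nat.mod_add_div' (p - 1) q
      omega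
    exact ⟨christoffel r q, christoffel_mem_FareyHat hr hrq (by simpa using hpq), k,
      (theta_iterate_christoffel hq k).symm⟩

end FareyExt

/-! ### Farey intervals in terms of mechanical sequences -/

section Words

variable {q : ℕ} {f : ℕ → ℕ}

lemma digitSum_eq_sum_map_range (f : ℕ → ℕ) (n : ℕ) :
    digitSum f n = ((List.range n).map f).sum := rfl

lemma list_nil_le (l : List ℕ) : [] ≤ l := not_lt.1 (List.not_lt_nil l)

lemma list_le_of_sum_take_le {l m : List ℕ} (hlen : l.length = m.length)
    (h : ∀ n, (l.take n).sum ≤ (m.take n).sum) : l ≤ m := by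
  induction l generalizing m with
  | nil => exact list_nil_le m
  | cons a l ih =>
    cases m with
    | nil => simp at hlen
    | cons b m =>
      have hhead : a ≤ b := by simpa using h 1
      rw [← not_lt, List.cons_lt_cons_iff]
      rintro (hlt | ⟨rfl, hlt⟩)
      · exact hhead.not_gt hlt
      · exact (ih (by simpa using hlen) fun n => by simpa using h (n + 1)).not_gt hlt

lemma foldl_max_eq_of_isGreatest {α : Type*} [LinearOrder α] {l : List α} {a U : α}
    (h : IsGreatest {x | x ∈ a :: l} U) : l.foldl max a = U := by
  induction l generalizing a with
  | nil => exact (List.mem_singleton.1 h.1).symm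
  | cons x l ih =>
    obtain ⟨hmem, hub⟩ := h
    have ha : a ≤ U := hub List.mem_cons_self
    have hx : x ≤ U := hub (List.mem_cons_of_mem _ List.mem_cons_self)
    refine ih ⟨?_, List.forall_mem_cons.2 ⟨max_le ha hx, fun y hy => hub ?_⟩⟩
    · rcases List.mem_cons.1 hmem with rfl | hmem
      · simp [hx]
      · rcases List.mem_cons.1 hmem with rfl | hmem
        · simp [ha]
        · exact List.mem_cons_of_mem _ hmem
    · exact List.mem_cons_of_mem _ (List.mem_cons_of_mem _ hy)

lemma rotate_map_range (hf : Function.Periodic f q) (i : ℕ) :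
    ((List.range q).map f).rotate i = (List.range q).map (shiftn i f) := by
  refine List.ext_getElem (by simp) fun n _ _ => ?_
  simp [List.getElem_rotate, shiftn, hf.map_mod_nat]

lemma perSeq_map_range (hq : 0 < q) (hf : Function.Periodic f q) :
    perSeq ((List.range q).map f) = f := by
  funext i
  simp [perSeq, List.getD, Nat.mod_lt i hq, hf.map_mod_nat]

lemma wordSeq_wplus_map_range {g c : ℕ → ℕ} {m : ℕ} (hlt : ∀ i < m, g i = f i)
    (hlast : g m = f m + 1) (htail : shiftn (m + 1) g = c) :
    wordSeq (wplus ((List.range (m + 1)).map f)) c = g := by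
  have hword : wplus ((List.range (m + 1)).map f) = (List.range (m + 1)).map g := by
    have hinit : (List.range m).map g = (List.range m).map f :=
      List.map_congr_left fun i hi => hlt i (List.mem_range.1 hi)
    simp [wplus, List.range_succ, hinit, hlast]
  funext i
  rw [wordSeq, hword, List.length_map, List.length_range, ← htail]
  split_ifs with hi
  · simp [List.getD, hi]
  · rw [shiftn, Nat.sub_add_cancel (not_lt.1 hi)]

end Words

section FareyIntervals

variable {p q : ℕ}

lemma lowerMech_periodic (hq : 0 < q) : Function.Periodic (lowerMech ((p : ℝ) / q)) q :=
  congrFun (shiftn_lowerMech_div hq)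

lemma exists_shiftn_lowerMech_eq_upperMech (hq : 0 < q) (hpq : p.Coprime q) :
    ∃ i < q, shiftn i (lowerMech ((p : ℝ) / q)) = upperMech ((p : ℝ) / q) := by
  have hρ : 0 ≤ (p : ℝ) / q := by positivity
  obtain ⟨i, hi, hmod⟩ := Nat.exists_mul_mod_eq_of_coprime (q - 1) hpq hq.ne'
  rw [mul_comm, Nat.mod_eq_of_lt (Nat.sub_one_lt hq.ne')] at hmod
  refine ⟨i, hi, digitSum_injective ((digitSum_shiftn_lowerMech_le hρ i).antisymm fun n => ?_)⟩
  have hsum := digitSum_add (lowerMech ((p : ℝ) / q)) i n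
  rw [digitSum_lowerMech hρ, floorSum_div, floorSum_div] at hsum
  have hfloor := Nat.lt_mul_div_succ ((i + n) * p) hq
  rw [hsum] at hfloor
  have hle : n * p ≤ digitSum (shiftn i (lowerMech ((p : ℝ) / q))) n * q := by
    have hdiv := Nat.mod_add_div (i * p) q
    rw [hmod] at hdiv
    nlinarith [Nat.sub_add_cancel hq]
  rw [digitSum_upperMech hρ]
  refine Nat.ceil_le.2 ?_
  rw [← mul_div_assoc, div_le_iff₀ (by positivity)]
  exact_mod_cast hle

lemma upperMech_periodic (hq : 0 < q) (hpq : p.Coprime q) :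
    Function.Periodic (upperMech ((p : ℝ) / q)) q := by
  obtain ⟨i, -, hi⟩ := exists_shiftn_lowerMech_eq_upperMech hq hpq
  exact hi ▸ (lowerMech_periodic hq).add_const i

lemma maxCyc_christoffel (hq : 0 < q) (hpq : p.Coprime q) :
    maxCyc (christoffel p q) = (List.range q).map (upperMech ((p : ℝ) / q)) := by
  have hρ : 0 ≤ (p : ℝ) / q := by positivity
  unfold maxCyc
  rw [length_christoffel, christoffel_eq_map,
    funext (rotate_map_range (lowerMech_periodic hq))]
  refine foldl_max_eq_of_isGreatest ⟨List.mem_cons_of_mem _ ?_, List.forall_mem_cons.2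
    ⟨list_nil_le _, List.forall_mem_map.2 fun i _ => list_le_of_sum_take_le (by simp) fun n => ?_⟩⟩
  · obtain ⟨i, hi, heq⟩ := exists_shiftn_lowerMech_eq_upperMech hq hpq
    exact List.mem_map.2 ⟨i, List.mem_range.2 hi, by rw [heq]⟩
  · rw [← List.map_take, ← List.map_take, List.take_range, ← digitSum_eq_sum_map_range,
      ← digitSum_eq_sum_map_range]
    exact digitSum_shiftn_lowerMech_le hρ i _

lemma perSeq_maxCyc_christoffel (hq : 0 < q) (hpq : p.Coprime q) :
    perSeq (maxCyc (christoffel p q)) = upperMech ((p : ℝ) / q) := by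
  rw [maxCyc_christoffel hq hpq, perSeq_map_range hq (upperMech_periodic hq hpq)]

lemma ceilSumRight_div_of_lt {n : ℕ} (hpq : p.Coprime q) (hn : n < q) :
    ceilSumRight ((p : ℝ) / q) n = ceilSum ((p : ℝ) / q) n := by
  have : 0 < q := by omega
  refine le_antisymm ?_ (ceilSum_le_ceilSumRight _ _)
  unfold ceilSumRight ceilSum
  split_ifs with h0
  · exact Nat.zero_le _
  refine Nat.lt_ceil.2 ((Nat.floor_le (by positivity)).lt_of_ne fun h => ?_)
  rw [← mul_div_assoc, eq_div_iff (by positivity)] at h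
  have hdvd : q ∣ n * p := Dvd.intro_left _ (mod_cast h)
  exact Nat.not_dvd_of_pos_of_lt (by omega) hn (hpq.symm.dvd_of_dvd_mul_right hdvd)

lemma upperMechRight_div_of_lt {i : ℕ} (hpq : p.Coprime q) (hi : i + 1 < q) :
    upperMechRight ((p : ℝ) / q) i = upperMech ((p : ℝ) / q) i := by
  simp only [upperMechRight, upperMech, diffSeq, ceilSumRight_div_of_lt hpq hi,
    ceilSumRight_div_of_lt hpq (Nat.lt_of_succ_lt hi)]

lemma upperMechRight_div_pred {i : ℕ} (hpq : p.Coprime q) (hi : i + 1 = q) :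
    upperMechRight ((p : ℝ) / q) i = upperMech ((p : ℝ) / q) i + 1 := by
  have hmono : ceilSum ((p : ℝ) / q) i ≤ ceilSum ((p : ℝ) / q) (i + 1) :=
    ceilSum_monotone (by positivity) i.le_succ
  have hq : (q : ℝ) * (p / q) = p := mul_div_cancel₀ _ (by rw [← hi]; positivity)
  have hceil : ceilSum ((p : ℝ) / q) (i + 1) = p := by rw [ceilSum, hi, hq, Nat.ceil_natCast]
  have hright : ceilSumRight ((p : ℝ) / q) (i + 1) = p + 1 := by
    rw [ceilSumRight, if_neg i.succ_ne_zero, hi, hq, Nat.floor_natCast]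
  simp only [upperMechRight, upperMech, diffSeq, hceil, hright,
    ceilSumRight_div_of_lt hpq (i.lt_succ_self.trans_eq hi)]
  omega

lemma wordSeq_christoffel (hq : 0 < q) (hpq : p.Coprime q) :
    wordSeq (wplus (maxCyc (christoffel p q))) (perSeq (christoffel p q))
      = upperMechRight ((p : ℝ) / q) := by
  rw [maxCyc_christoffel hq hpq, christoffel_eq_map, perSeq_map_range hq (lowerMech_periodic hq)]
  obtain ⟨m, rfl⟩ := Nat.exists_eq_succ_of_ne_zero hq.ne'
  exact wordSeq_wplus_map_range (fun i hi => upperMechRight_div_of_lt hpq (Nat.succ_lt_succ hi))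
    (upperMechRight_div_pred hpq rfl)
    ((shiftn_upperMechRight _ m).trans (shiftn_lowerMech_div hq))

lemma betaL_christoffel_spec (hp : 0 < p) (hq : 0 < q) (hpq : p.Coprime q) :
    1 < betaL (christoffel p q) ∧
      valSeq (betaL (christoffel p q)) (upperMech ((p : ℝ) / q)) = 1 := by
  unfold betaL
  rw [perSeq_maxCyc_christoffel hq hpq]
  exact Classical.epsilon_spec (exists_base_upperMech (by positivity))

lemma betaR_christoffel_spec (hp : 0 < p) (hq : 0 < q) (hpq : p.Coprime q) :
    1 < betaR (christoffel p q) ∧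
      valSeq (betaR (christoffel p q)) (upperMechRight ((p : ℝ) / q)) = 1 := by
  unfold betaR
  rw [wordSeq_christoffel hq hpq]
  exact Classical.epsilon_spec (exists_base_upperMechRight (by positivity))

lemma valSeq_upperMech_strictAntiOn {ρ : ℝ} (hρ : 0 < ρ) :
    StrictAntiOn (fun β => valSeq β (upperMech ρ)) (Ioi 1) :=
  valSeq_strictAntiOn (bddDigits_upperMech ρ) (upperMech_zero_pos hρ)

lemma mem_Jint_christoffel_iff {β : ℝ} (hβ : 1 < β) (hp : 0 < p) (hq : 0 < q)
    (hpq : p.Coprime q) : β ∈ Jint (christoffel p q) ↔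
      valSeq β (upperMech ((p : ℝ) / q)) ≤ 1 ∧ 1 ≤ valSeq β (upperMechRight ((p : ℝ) / q)) := by
  obtain ⟨hL, hL_val⟩ := betaL_christoffel_spec hp hq hpq
  obtain ⟨hR, hR_val⟩ := betaR_christoffel_spec hp hq hpq
  have hρ : 0 < (p : ℝ) / q := by positivity
  have hanti := valSeq_strictAntiOn (bddDigits_upperMechRight hρ.le)
    ((Nat.succ_pos _).trans_eq (upperMechRight_zero _).symm)
  exact and_congr (hL_val ▸ ((valSeq_upperMech_strictAntiOn hρ).le_iff_ge hβ hL).symm)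
    (hR_val ▸ (hanti.le_iff_ge hR hβ).symm)

end FareyIntervals

/-! ### The exceptional set -/

section ExceptionalSet

variable {β ρ : ℝ}

lemma exists_valSeq_upperMech_eq_one_of_mem_EL (h : β ∈ EL) :
    1 < β ∧ ∃ ρ, 0 < ρ ∧ valSeq β (upperMech ρ) = 1 := by
  rcases h with ⟨hβ, hJ⟩ | ⟨s, hs, rfl⟩
  · refine ⟨hβ, (exists_valSeq_upperMech_eq_one_or_lt hβ).resolve_right ?_⟩
    rintro ⟨p, q, hp, hq, hpq, hlt, hle⟩
    exact hJ (mem_biUnion (mem_FareyExt_iff.2 ⟨p, q, hp, hq, hpq, rfl⟩)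
      ((mem_Jint_christoffel_iff hβ hp hq hpq).2 ⟨hlt.le, hle⟩))
  · obtain ⟨p, q, hp, hq, hpq, rfl⟩ := mem_FareyExt_iff.1 hs
    obtain ⟨hβ, hval⟩ := betaL_christoffel_spec hp hq hpq
    exact ⟨hβ, _, by positivity, hval⟩

lemma mem_Eexc_of_irrational (hβ : 1 < β) (hρ : 0 < ρ) (hirr : Irrational ρ)
    (h : valSeq β (upperMech ρ) = 1) : β ∈ Eexc := by
  refine ⟨hβ, fun hJ => ?_⟩
  obtain ⟨s, hs, hJ⟩ := mem_iUnion₂.1 hJ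
  obtain ⟨p, q, hp, hq, hpq, rfl⟩ := mem_FareyExt_iff.1 hs
  obtain ⟨hle, hge⟩ := (mem_Jint_christoffel_iff hβ hp hq hpq).1 hJ
  rcases lt_trichotomy ρ ((p : ℝ) / q) with hlt | heq | hgt
  · have hmono := valSeq_upperMech_strictMonoOn hβ hρ.le (hρ.trans hlt).le hlt
    exact (h.symm.trans_lt hmono).not_ge hle
  · exact hirr ⟨(p : ℚ) / q, by rw [heq]; push_cast; rfl⟩
  · exact (h ▸ valSeq_upperMechRight_lt hβ (by positivity) hgt).not_ge hge

lemma eq_betaL_christoffel {p q : ℕ} (hβ : 1 < β) (hp : 0 < p) (hq : 0 < q) (hpq : p.Coprime q)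
    (h : valSeq β (upperMech ((p : ℝ) / q)) = 1) : β = betaL (christoffel p q) := by
  obtain ⟨hL, hL_val⟩ := betaL_christoffel_spec hp hq hpq
  exact (valSeq_upperMech_strictAntiOn (by positivity)).injOn hβ hL (h.trans hL_val.symm)

lemma mem_EL_iff : β ∈ EL ↔ 1 < β ∧ ∃ ρ, 0 < ρ ∧ valSeq β (upperMech ρ) = 1 := by
  refine ⟨exists_valSeq_upperMech_eq_one_of_mem_EL, ?_⟩
  rintro ⟨hβ, ρ, hρ, h⟩
  by_cases hirr : Irrational ρ
  · exact Or.inl (mem_Eexc_of_irrational hβ hρ hirr h)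
  · obtain ⟨p, q, hp, hq, hpq, rfl⟩ := exists_coprime_div_of_not_irrational hρ hirr
    exact Or.inr ⟨_, mem_FareyExt_iff.2 ⟨p, q, hp, hq, hpq, rfl⟩,
      eq_betaL_christoffel hβ hp hq hpq h⟩

lemma not_countable_EL : ¬ EL.Countable := fun hcount => by
  choose! B hB hval using fun ρ (hρ : (0 : ℝ) < ρ) => exists_base_upperMech hρ
  have hmaps : MapsTo B (Ioi 0) EL := fun ρ hρ => mem_EL_iff.2 ⟨hB ρ hρ, ρ, hρ, hval ρ hρ⟩
  have hinj : InjOn B (Ioi 0) := fun r hr ρ hρ heq =>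
    (valSeq_upperMech_strictMonoOn (hB r hr)).injOn (mem_Ioi.1 hr).le (mem_Ioi.1 hρ).le
      ((hval r hr).trans (heq ▸ hval ρ hρ).symm)
  simpa using (hmaps.countable_of_injOn hinj hcount).measure_zero volume

end ExceptionalSet

/-! ### Hausdorff dimension -/

section Covers

variable {X : Type*} [EMetricSpace X] {ι : ℕ → Type*} [∀ n, Fintype (ι n)]
  {t : ∀ n, ι n → Set X} {a C : ℝ}

lemma tendsto_pow_succ_mul_rpow_div_pow {d : ℝ} (hd : 0 < d) (ha : 1 < a) (hC : 0 ≤ C) (k : ℕ) :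
    Tendsto (fun n : ℕ => ((n : ℝ) + 1) ^ k * (C / a ^ n) ^ d) atTop (𝓝 0) := by
  have : 0 < a := by linarith
  set r : ℝ := (a ^ d)⁻¹ with hr
  have hr0 : 0 < r := by positivity
  have hr1 : r < 1 := inv_lt_one_of_one_lt₀ (Real.one_lt_rpow ha hd)
  have hpow (n : ℕ) : (C / a ^ n) ^ d = C ^ d * r ^ n := by
    rw [Real.div_rpow hC (by positivity), hr, inv_pow, div_eq_mul_inv, ← Real.rpow_natCast,
      ← Real.rpow_natCast, ← Real.rpow_mul this.le, ← Real.rpow_mul this.le, mul_comm (n : ℝ)]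
  have hlim := ((tendsto_pow_const_mul_const_pow_of_lt_one k hr0.le hr1).comp
    (tendsto_add_atTop_nat 1)).const_mul (C ^ d * r⁻¹)
  rw [mul_zero] at hlim
  refine hlim.congr fun n => ?_
  rw [hpow, Function.comp_apply, pow_succ, Nat.cast_succ]
  field_simp

lemma sum_ediam_rpow_le {κ : Type*} [Fintype κ] {u : κ → Set X} {d D : ℝ} (hd : 0 ≤ d)
    (hD : 0 ≤ D) (hdiam : ∀ i, Metric.ediam (u i) ≤ ENNReal.ofReal D) :
    ∑ i, Metric.ediam (u i) ^ d ≤ ENNReal.ofReal (Fintype.card κ * D ^ d) := by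
  calc ∑ i, Metric.ediam (u i) ^ d
      ≤ ∑ _i : κ, ENNReal.ofReal (D ^ d) := Finset.sum_le_sum fun i _ => by
        rw [← ENNReal.ofReal_rpow_of_nonneg hD hd]
        exact ENNReal.rpow_le_rpow (hdiam i) hd
    _ = ENNReal.ofReal (Fintype.card κ * D ^ d) := by
        rw [Finset.sum_const, Finset.card_univ, nsmul_eq_mul, ENNReal.ofReal_mul (by positivity),
          ENNReal.ofReal_natCast]

lemma tendsto_sum_ediam_rpow {N k : ℕ} {d : ℝ} (hd : 0 < d) (ha : 1 < a) (hC : 0 ≤ C)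
    (hcard : ∀ n, Fintype.card (ι n) ≤ N * (n + 1) ^ k)
    (hdiam : ∀ n i, Metric.ediam (t n i) ≤ ENNReal.ofReal (C / a ^ n)) :
    Tendsto (fun n => ∑ i, Metric.ediam (t n i) ^ d) atTop (𝓝 0) := by
  have hlim := ENNReal.tendsto_ofReal
    ((tendsto_pow_succ_mul_rpow_div_pow hd ha hC k).const_mul (N : ℝ))
  rw [mul_zero, ENNReal.ofReal_zero] at hlim
  refine tendsto_of_tendsto_of_tendsto_of_le_of_le tendsto_const_nhds hlim (fun n => zero_le)
    fun n => ?_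
  have : 0 ≤ C / a ^ n := by positivity
  refine (sum_ediam_rpow_le hd.le this (hdiam n)).trans (ENNReal.ofReal_le_ofReal ?_)
  rw [← mul_assoc]
  gcongr
  exact_mod_cast hcard n

lemma dimH_eq_zero_of_cover {s : Set X} {N k : ℕ} (ha : 1 < a) (hC : 0 ≤ C)
    (hcard : ∀ n, Fintype.card (ι n) ≤ N * (n + 1) ^ k)
    (hdiam : ∀ n i, Metric.ediam (t n i) ≤ ENNReal.ofReal (C / a ^ n))
    (hcover : ∀ n, s ⊆ ⋃ i, t n i) : dimH s = 0 := by
  borelize X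
  refine le_antisymm (le_of_forall_gt fun d hd => ?_) zero_le
  obtain ⟨d', hpos, hlt⟩ := ENNReal.lt_iff_exists_nnreal_btwn.1 hd
  have hscale : Tendsto (fun n : ℕ => ENNReal.ofReal (C / a ^ n)) atTop (𝓝 0) := by
    simpa using ENNReal.tendsto_ofReal (tendsto_div_pow_atTop ha C)
  have hle := Measure.hausdorffMeasure_le_liminf_sum (d' : ℝ) s _ hscale t
    (Eventually.of_forall hdiam) (Eventually.of_forall hcover)
  rw [(tendsto_sum_ediam_rpow (mod_cast hpos) ha hC hcard hdiam).liminf_eq] at hle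
  exact (dimH_le_of_hausdorffMeasure_ne_top (hle.trans_lt ENNReal.zero_lt_top).ne).trans_lt hlt

end Covers

section Dimension

variable {β β' r ρ ρ' a : ℝ} {c d : ℕ → ℕ} {N n : ℕ}

/-- An index in `ℕ` for the first `n` digits of `upperMech ρ`. As every digit sum of `upperMech ρ`
is monotone in `ρ`, their total determines each of them, and it takes only `O(n²)` values for
bounded `ρ`. -/
noncomputable def ceilIndex (ρ : ℝ) (n : ℕ) : ℕ := ∑ k ∈ Finset.range (n + 1), ceilSum ρ k

lemma ceilIndex_le (hρ : ρ ≤ N) (n : ℕ) : ceilIndex ρ n ≤ N * (n * (n + 1)) := by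
  have hterm : ∀ k ∈ Finset.range (n + 1), ceilSum ρ k ≤ n * N := fun k hk => by
    refine Nat.ceil_le.2 ?_
    have : (k : ℝ) ≤ n := mod_cast Nat.lt_succ_iff.1 (Finset.mem_range.1 hk)
    calc (k : ℝ) * ρ ≤ k * N := by gcongr
      _ ≤ n * N := by gcongr
      _ = (n * N : ℕ) := by push_cast; rfl
  have hsum := Finset.sum_le_card_nsmul _ _ _ hterm
  rw [Finset.card_range, smul_eq_mul] at hsum
  exact hsum.trans_eq (by ring)

lemma upperMech_eq_of_ceilIndex_eq (h : ceilIndex r n = ceilIndex ρ n) :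
    ∀ i < n, upperMech r i = upperMech ρ i := by
  wlog hle : r ≤ ρ generalizing r ρ
  · exact fun i hi => (this h.symm (le_of_not_ge hle) i hi).symm
  have hceil : ∀ k ∈ Finset.range (n + 1), ceilSum r k = ceilSum ρ k :=
    (Finset.sum_eq_sum_iff_of_le fun k _ => by unfold ceilSum; gcongr).1 h
  intro i hi
  simp only [upperMech, diffSeq, hceil i (Finset.mem_range.2 (by omega)),
    hceil (i + 1) (Finset.mem_range.2 (by omega))]

lemma slope_le (hβ : 1 < β) (hρ : 0 ≤ ρ) (h : valSeq β (upperMech ρ) = 1) : ρ ≤ β := by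
  have hle := div_le_valSeq hβ (bddDigits_upperMech ρ) (mul_le_digitSum_upperMech hρ)
  rw [h, div_le_one (by linarith)] at hle
  linarith

lemma valSeq_sub_le_of_agree (ha : 1 < a) (hβ : a ≤ β) (hc : ∀ i, c i ≤ N) (hd : BddDigits d)
    (h : ∀ i < n, c i = d i) : valSeq β c - valSeq β d ≤ N / (a - 1) / a ^ n := by
  have hβ1 : 1 < β := by linarith
  have : 0 < a - 1 := by linarith
  have htail : valSeq β (shiftn n c) - valSeq β (shiftn n d) ≤ N / (a - 1) :=
    calc _ ≤ valSeq β (shiftn n c) := sub_le_self _ (valSeq_nonneg hβ1 _)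
      _ ≤ N / (β - 1) := valSeq_le_div hβ1 fun i => hc _
      _ ≤ N / (a - 1) := by gcongr
  rw [valSeq_sub_of_agree hβ1 ⟨N, hc⟩ hd h]
  gcongr

lemma base_sub_le_mul_valSeq_sub {M : ℝ} (hβ : 1 < β) (hle : β ≤ β') (hM : β' ≤ M)
    (hc : BddDigits c) (hpos : 0 < c 0) :
    β' - β ≤ M ^ 2 * (valSeq β c - valSeq β' c) := by
  have hβ' : 1 < β' := by linarith
  have hdiff := le_valSeq_sub hβ hle hc 0
  rw [zero_add, pow_one, pow_one] at hdiff
  have hprod : β * β' ≤ M ^ 2 := by nlinarith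
  have hone : (1 : ℝ) ≤ c 0 := mod_cast hpos
  calc β' - β = β * β' * ((β' - β) / (β * β')) := by field_simp
    _ ≤ M ^ 2 * (c 0 * ((β' - β) / (β * β'))) := by
        have : 0 ≤ (β' - β) / (β * β') := div_nonneg (by linarith) (by positivity)
        gcongr
        exact le_mul_of_one_le_left this hone
    _ = M ^ 2 * (c 0 / β - c 0 / β') := by field_simp
    _ ≤ M ^ 2 * (valSeq β c - valSeq β' c) := by gcongr

lemma base_sub_le_of_ceilIndex_eq (ha : 1 < a) (hβ : a ≤ β) (hle : β ≤ β') (hN : β' ≤ N)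
    (hρ' : 0 < ρ') (h : valSeq β (upperMech ρ) = 1) (h' : valSeq β' (upperMech ρ') = 1)
    (hindex : ceilIndex ρ n = ceilIndex ρ' n) : β' - β ≤ N ^ 2 * (N / (a - 1)) / a ^ n := by
  have hdigit (i : ℕ) : upperMech ρ' i ≤ N :=
    (upperMech_le ρ' i).trans (Nat.ceil_le.2 ((slope_le (by linarith) hρ'.le h').trans hN))
  calc β' - β ≤ N ^ 2 * (valSeq β (upperMech ρ') - valSeq β' (upperMech ρ')) :=
        base_sub_le_mul_valSeq_sub (by linarith) hle hN (bddDigits_upperMech ρ')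
          (upperMech_zero_pos hρ')
    _ = N ^ 2 * (valSeq β (upperMech ρ') - valSeq β (upperMech ρ)) := by rw [h, h']
    _ ≤ N ^ 2 * (N / (a - 1) / a ^ n) := by
        gcongr
        exact valSeq_sub_le_of_agree ha hβ hdigit (bddDigits_upperMech ρ)
          (upperMech_eq_of_ceilIndex_eq hindex.symm)
    _ = N ^ 2 * (N / (a - 1)) / a ^ n := (mul_div_assoc _ _ _).symm

lemma dimH_EL_inter_Icc (ha : 1 < a) (N : ℕ) : dimH (EL ∩ Icc a N) = 0 := by
  have : 0 < a - 1 := by linarith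
  refine dimH_eq_zero_of_cover (ι := fun n => Fin (N * (n * (n + 1)) + 1)) (N := N + 1) (k := 2)
    (t := fun n i => {β | β ∈ Icc a N ∧ ∃ ρ, 0 < ρ ∧ valSeq β (upperMech ρ) = 1 ∧
      ceilIndex ρ n = i}) (C := N ^ 2 * (N / (a - 1))) ha (by positivity) (fun n => ?_)
    (fun n i => Metric.ediam_le fun β hβ β' hβ' => ?_) fun n β hβ => ?_
  · rw [Fintype.card_fin]
    nlinarith
  · wlog hle : β ≤ β' generalizing β β'
    · rw [edist_comm]
      exact this β' hβ' β hβ (le_of_not_ge hle)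
    obtain ⟨hβ, ρ, -, h, hindex⟩ := hβ
    obtain ⟨hβ', ρ', hρ', h', hindex'⟩ := hβ'
    rw [edist_comm, edist_dist, Real.dist_eq, abs_of_nonneg (sub_nonneg.2 hle)]
    exact ENNReal.ofReal_le_ofReal
      (base_sub_le_of_ceilIndex_eq ha hβ.1 hle hβ'.2 hρ' h h' (hindex.trans hindex'.symm))
  · obtain ⟨hβ1, ρ, hρ, h⟩ := mem_EL_iff.1 hβ.1
    have hindex := ceilIndex_le ((slope_le hβ1 hρ.le h).trans hβ.2.2) n
    exact mem_iUnion.2 ⟨⟨ceilIndex ρ n, Nat.lt_succ_iff.2 hindex⟩, hβ.2, ρ, hρ, h, rfl⟩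

lemma dimH_EL : dimH EL = 0 := by
  have hcover : EL ⊆ ⋃ m : ℕ, ⋃ N : ℕ, EL ∩ Icc (1 + 1 / ((m : ℝ) + 1)) N := fun β hβ => by
    obtain ⟨m, hm⟩ := exists_nat_one_div_lt (sub_pos.2 (mem_EL_iff.1 hβ).1)
    obtain ⟨N, hN⟩ := exists_nat_gt β
    exact mem_iUnion₂.2 ⟨m, N, hβ, by linarith, hN.le⟩
  refine le_antisymm ((dimH_mono hcover).trans ?_) zero_le
  simp only [dimH_iUnion]
  exact iSup₂_le fun m N => (dimH_EL_inter_Icc (lt_add_of_pos_right _ (by positivity)) N).le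

end Dimension

/-- The set `E_L` is uncountable, has Hausdorff dimension zero, and for
every `β > 1` the bifurcation set `E_β` contains no isolated points iff `β ∈ E_L`. -/
theorem EL_uncountable_dim_zero_no_isolated :
    ¬ EL.Countable ∧ dimH EL = 0 ∧
      ∀ β : ℝ, 1 < β → ((∀ t ∈ Ebif β, AccPt t (𝓟 (Ebif β))) ↔ β ∈ EL) := by
  refine ⟨not_countable_EL, dimH_EL, fun β hβ => ⟨fun h => ?_, fun h t ht => ?_⟩⟩
  · rcases exists_valSeq_upperMech_eq_one_or_lt hβ with h1 | ⟨p, q, hp, hq, hpq, hlt, hle⟩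
    · exact mem_EL_iff.2 ⟨hβ, h1⟩
    · obtain ⟨t, ht, hacc⟩ := exists_isolated_Ebif hβ hp hq hpq hlt hle
      exact absurd (h t ht) hacc
  · obtain ⟨-, ρ, hρ, h1⟩ := mem_EL_iff.1 h
    exact accPt_Ebif_of_upperMech hβ hρ h1 ht
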